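/- Let 0 < λ ≤ 1 and 0 < α ≤ 1, and let N(λ,α,T) denote the number of nontrivial zeros ρ = β + iγ of L(λ,α,·) with 0 < γ < T, counted with multiplicity. Then, as T → ∞, N(λ,α,T) = (T/(2π))·log(T/(2πeαλ)) + O(log T). -/

import Mathlib

/-! Apply the argument principle to `F` on the rectangle `[-1, 1 + α] × [T₀, T]`, whose horizontal
sides avoid the zeros. On `re s = 1 + α` the first term `α ^ (-s)` dominates the Dirichlet series,
so the argument varies by `-T log α + O(1)`. On `re s = -1` the functional equation, obtained from
Lipschitz's formula, writes `F s` as `Γ(1 - s)` times elementary factors, times a Dirichlet series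
in `1 - s` dominated by its first term `λ ^ (s - 1)`, up to an exponentially small error; Stirling's
formula for `im log Γ` then yields the main term. On the horizontal sides `F` grows polynomially, so
by Jensen's and Borel–Carathéodory's inequalities `F' / F` is, up to an integrable part of size
`O(log T)`, a sum of `O(log T)` simple fractions, each of which contributes at most `π` to the
variation of the argument. Heights at which `F` has zeros are reached by monotonicity. -/

/-- The Dirichlet series of the Lerch zeta-function, convergent for `1 < re s`. -/
noncomputable def lerchSeries (lam alp : ℝ) (s : ℂ) : ℂ :=
  ∑' m : ℕ, Complex.exp (2 * Real.pi * Complex.I * lam * m) / ((m : ℂ) + alp) ^ s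

/-- `F` is the analytic continuation of the Lerch zeta-function with parameters `lam`, `alp`:
it is complex differentiable away from `1` and agrees with the Dirichlet series on `1 < re s`. -/
def IsLerch (lam alp : ℝ) (F : ℂ → ℂ) : Prop :=
  (∀ s : ℂ, s ≠ 1 → DifferentiableAt ℂ F s) ∧
  ∀ s : ℂ, 1 < s.re → F s = lerchSeries lam alp s

open scoped Classical

/-- The multiplicity (order of vanishing) of `F` at `z` (junk value `0` if `F` is not
analytic at `z` or vanishes to infinite order). -/
noncomputable def zeroOrder (F : ℂ → ℂ) (z : ℂ) : ℕ :=
  if h : AnalyticAt ℂ F z then (analyticOrderAt F z).toNat else 0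

section ZeroFactorization

open Complex Set Filter Topology

theorem exists_eq_sub_pow_mul {f : ℂ → ℂ} {a : ℂ} (hf : AnalyticAt ℂ f a)
    (hord : analyticOrderAt f a ≠ ⊤) :
    ∃ g : ℂ → ℂ, (∀ z, f z = (z - a) ^ analyticOrderNatAt f a * g z) ∧
      (∀ z, AnalyticAt ℂ f z → AnalyticAt ℂ g z) ∧ g a ≠ 0 := by
  obtain ⟨g₁, hg₁, hg₁a, hfg₁⟩ := hf.analyticOrderAt_ne_top.mp hord
  set n := analyticOrderNatAt f a
  set g : ℂ → ℂ := Function.update (fun z => f z / (z - a) ^ n) a (g₁ a) with hg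
  have g_of_ne : ∀ {z}, z ≠ a → g z = f z / (z - a) ^ n := fun h => Function.update_of_ne h ..
  have g_self : g a = g₁ a := Function.update_self ..
  have g_eq_g₁ : g =ᶠ[𝓝 a] g₁ := by
    filter_upwards [hfg₁] with z hz
    rcases eq_or_ne z a with rfl | h
    · exact g_self
    · rw [g_of_ne h, hz, smul_eq_mul, mul_div_cancel_left₀ _ (pow_ne_zero _ (sub_ne_zero.mpr h))]
  refine ⟨g, fun z => ?_, fun z hz => ?_, g_self ▸ hg₁a⟩
  · rcases eq_or_ne z a with rfl | h
    · rw [g_self]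
      exact hfg₁.self_of_nhds
    · rw [g_of_ne h, mul_div_cancel₀ _ (pow_ne_zero _ (sub_ne_zero.mpr h))]
  · rcases eq_or_ne z a with rfl | h
    · exact hg₁.congr g_eq_g₁.symm
    · have hne : (z - a) ^ n ≠ 0 := pow_ne_zero _ (sub_ne_zero.mpr h)
      refine (hz.div (g := fun w => (w - a) ^ n) (by fun_prop) hne).congr ?_
      filter_upwards [isOpen_ne.mem_nhds h] with w hw using (g_of_ne hw).symm

theorem exists_eq_prod_sub_pow_mul {f : ℂ → ℂ} {S : Finset ℂ} (hf : ∀ ρ ∈ S, AnalyticAt ℂ f ρ)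
    (hord : ∀ ρ ∈ S, analyticOrderAt f ρ ≠ ⊤) :
    ∃ g : ℂ → ℂ, (∀ z, f z = (∏ ρ ∈ S, (z - ρ) ^ analyticOrderNatAt f ρ) * g z) ∧
      (∀ z, AnalyticAt ℂ f z → AnalyticAt ℂ g z) ∧ ∀ ρ ∈ S, g ρ ≠ 0 := by
  induction S using Finset.induction_on with
  | empty => exact ⟨f, by simp, fun _ h => h, by simp⟩
  | insert a S ha ih =>
    rw [Finset.forall_mem_insert] at hf hord
    obtain ⟨g, hfg, hg, hgS⟩ := ih hf.2 hord.2
    set P : ℂ → ℂ := fun z => ∏ ρ ∈ S, (z - ρ) ^ analyticOrderNatAt f ρ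
    have hPa : P a ≠ 0 := Finset.prod_ne_zero_iff.mpr fun ρ hρ =>
      pow_ne_zero _ (sub_ne_zero.mpr fun h => ha (h ▸ hρ))
    have hPan : AnalyticAt ℂ P a := by fun_prop
    have order_eq : analyticOrderAt f a = analyticOrderAt g a := by
      rw [show f = P * g from funext hfg, analyticOrderAt_mul hPan (hg a hf.1),
        hPan.analyticOrderAt_eq_zero.mpr hPa, zero_add]
    obtain ⟨h, hgh, hh, hha⟩ := exists_eq_sub_pow_mul (hg a hf.1) (order_eq ▸ hord.1)
    refine ⟨h, fun z => ?_, fun z hz => hh z (hg z hz), ?_⟩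
    · rw [Finset.prod_insert ha, hfg z, hgh z, analyticOrderNatAt, analyticOrderNatAt, order_eq]
      ring
    · exact Finset.forall_mem_insert _ _ _ |>.mpr
        ⟨hha, fun ρ hρ => right_ne_zero_of_mul (hgh ρ ▸ hgS ρ hρ)⟩

theorem logDeriv_prod_sub_pow_mul {f g : ℂ → ℂ} {S : Finset ℂ} {n : ℂ → ℕ} {z : ℂ}
    (hfg : ∀ w, f w = (∏ ρ ∈ S, (w - ρ) ^ n ρ) * g w) (hz : z ∉ S)
    (hg : DifferentiableAt ℂ g z) (hgz : g z ≠ 0) :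
    logDeriv f z = ∑ ρ ∈ S, (n ρ : ℂ) * (z - ρ)⁻¹ + logDeriv g z := by
  have hpow : ∀ ρ ∈ S, (z - ρ) ^ n ρ ≠ 0 := fun ρ hρ =>
    pow_ne_zero _ (sub_ne_zero.mpr fun h => hz (h ▸ hρ))
  rw [show f = fun w => (∏ ρ ∈ S, (w - ρ) ^ n ρ) * g w from funext hfg,
    logDeriv_mul (f := fun w => ∏ ρ ∈ S, (w - ρ) ^ n ρ) z (Finset.prod_ne_zero_iff.mpr hpow) hgz
      (by fun_prop) hg, logDeriv_prod (f := fun ρ w => (w - ρ) ^ n ρ) hpow (by fun_prop)]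
  congr 1
  refine Finset.sum_congr rfl fun ρ _ => ?_
  rw [logDeriv_fun_pow (by fun_prop)]
  simp [logDeriv_apply]

theorem finite_zeros_of_isCompact {K : Set ℂ} {f : ℂ → ℂ} (hK : IsCompact K)
    (hf : AnalyticOnNhd ℂ f K) (hord : ∀ z ∈ K, analyticOrderAt f z ≠ ⊤) :
    {z | z ∈ K ∧ f z = 0}.Finite := by
  by_contra hinf
  obtain ⟨z, hzK, hz⟩ := Set.Infinite.exists_accPt_of_subset_isCompact hinf hK fun z hz => hz.1
  rcases (hf z hzK).eventually_eq_zero_or_eventually_ne_zero with h | h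
  · exact hord z hzK (analyticOrderAt_eq_top.mpr h)
  · obtain ⟨w, hw, hw'⟩ := ((accPt_iff_frequently_nhdsNE.mp hz).and_eventually h).exists
    exact hw' hw.2

end ZeroFactorization

section RectangleIntegral

open Complex Set
open scoped Interval

variable {f g : ℂ → ℂ} {a b c d : ℝ}

/-- The boundary of the rectangle with opposite corners `a + ci` and `b + di`. -/
def rectBoundary (a b c d : ℝ) : Set ℂ :=
  ([[a, b]] ×ℂ {c, d}) ∪ ({a, b} ×ℂ [[c, d]])

/-- The integral of `f` along the boundary of the rectangle with corners `a + ci` and `b + di`,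
counterclockwise if `a ≤ b` and `c ≤ d`. -/
noncomputable def rectIntegral (f : ℂ → ℂ) (a b c d : ℝ) : ℂ :=
  (∫ x : ℝ in a..b, f (x + c * I)) - (∫ x : ℝ in a..b, f (x + d * I)) +
    I * (∫ y : ℝ in c..d, f (b + y * I)) - I * (∫ y : ℝ in c..d, f (a + y * I))

theorem add_mul_I_mem_rectBoundary_of_im {x y : ℝ} (hx : x ∈ [[a, b]]) (hy : y = c ∨ y = d) :
    (x + y * I : ℂ) ∈ rectBoundary a b c d :=
  Or.inl (by simpa [mem_reProdIm] using ⟨hx, hy⟩)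

theorem add_mul_I_mem_rectBoundary_of_re {x y : ℝ} (hx : x = a ∨ x = b) (hy : y ∈ [[c, d]]) :
    (x + y * I : ℂ) ∈ rectBoundary a b c d :=
  Or.inr (by simpa [mem_reProdIm] using ⟨hx, hy⟩)

theorem rectBoundary_subset (hab : a ≤ b) (hcd : c ≤ d) :
    rectBoundary a b c d ⊆ Icc a b ×ℂ Icc c d := by
  rw [← uIcc_of_le hab, ← uIcc_of_le hcd]
  rintro z (⟨hx, hy | hy⟩ | ⟨hx | hx, hy⟩)
  · exact ⟨hx, hy ▸ left_mem_uIcc⟩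
  · exact ⟨hx, (Set.mem_singleton_iff.mp hy) ▸ right_mem_uIcc⟩
  · exact ⟨hx ▸ left_mem_uIcc, hy⟩
  · exact ⟨(Set.mem_singleton_iff.mp hx) ▸ right_mem_uIcc, hy⟩

theorem ne_of_mem_rectBoundary {z ρ : ℂ} (hz : z ∈ rectBoundary a b c d)
    (hρ : ρ ∈ Ioo a b ×ℂ Ioo c d) : z ≠ ρ := by
  rintro rfl
  obtain ⟨⟨h₁, h₂⟩, h₃, h₄⟩ := hρ
  rcases hz with ⟨-, h | h⟩ | ⟨h | h, -⟩
  exacts [h₃.ne' h, h₄.ne h, h₁.ne' h, h₂.ne h]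

theorem continuousOn_horizontal_side (hf : ContinuousOn f (rectBoundary a b c d)) {y : ℝ}
    (hy : y = c ∨ y = d) : ContinuousOn (fun x : ℝ => f (x + y * I)) [[a, b]] :=
  hf.comp (by fun_prop) fun _ hx => add_mul_I_mem_rectBoundary_of_im hx hy

theorem continuousOn_vertical_side (hf : ContinuousOn f (rectBoundary a b c d)) {x : ℝ}
    (hx : x = a ∨ x = b) : ContinuousOn (fun y : ℝ => f (x + y * I)) [[c, d]] :=
  hf.comp (by fun_prop) fun _ hy => add_mul_I_mem_rectBoundary_of_re hx hy

theorem rectIntegral_congr (h : EqOn f g (rectBoundary a b c d)) :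
    rectIntegral f a b c d = rectIntegral g a b c d := by
  have hor : ∀ y, y = c ∨ y = d →
      ∫ x : ℝ in a..b, f (x + y * I) = ∫ x : ℝ in a..b, g (x + y * I) := fun y hy =>
    intervalIntegral.integral_congr fun x hx => h (add_mul_I_mem_rectBoundary_of_im hx hy)
  have ver : ∀ x, x = a ∨ x = b →
      ∫ y : ℝ in c..d, f (x + y * I) = ∫ y : ℝ in c..d, g (x + y * I) := fun x hx =>
    intervalIntegral.integral_congr fun y hy => h (add_mul_I_mem_rectBoundary_of_re hx hy)
  rw [rectIntegral, rectIntegral, hor c (.inl rfl), hor d (.inr rfl), ver b (.inr rfl),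
    ver a (.inl rfl)]

theorem rectIntegral_add (hf : ContinuousOn f (rectBoundary a b c d))
    (hg : ContinuousOn g (rectBoundary a b c d)) :
    rectIntegral (fun z => f z + g z) a b c d =
      rectIntegral f a b c d + rectIntegral g a b c d := by
  have hor : ∀ y, y = c ∨ y = d → ∫ x : ℝ in a..b, (f (x + y * I) + g (x + y * I)) =
      (∫ x : ℝ in a..b, f (x + y * I)) + ∫ x : ℝ in a..b, g (x + y * I) := fun y hy =>
    intervalIntegral.integral_add (continuousOn_horizontal_side hf hy).intervalIntegrable
      (continuousOn_horizontal_side hg hy).intervalIntegrable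
  have ver : ∀ x, x = a ∨ x = b → ∫ y : ℝ in c..d, (f (x + y * I) + g (x + y * I)) =
      (∫ y : ℝ in c..d, f (x + y * I)) + ∫ y : ℝ in c..d, g (x + y * I) := fun x hx =>
    intervalIntegral.integral_add (continuousOn_vertical_side hf hx).intervalIntegrable
      (continuousOn_vertical_side hg hx).intervalIntegrable
  simp only [rectIntegral, hor c (.inl rfl), hor d (.inr rfl), ver b (.inr rfl), ver a (.inl rfl)]
  ring

theorem rectIntegral_const_mul (k : ℂ) :
    rectIntegral (fun z => k * f z) a b c d = k * rectIntegral f a b c d := by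
  simp only [rectIntegral, intervalIntegral.integral_const_mul]
  ring

theorem rectIntegral_finset_sum {ι : Type*} {S : Finset ι} {f : ι → ℂ → ℂ}
    (hf : ∀ i ∈ S, ContinuousOn (f i) (rectBoundary a b c d)) :
    rectIntegral (fun z => ∑ i ∈ S, f i z) a b c d = ∑ i ∈ S, rectIntegral (f i) a b c d := by
  classical
  induction S using Finset.induction_on with
  | empty => simp [rectIntegral]
  | insert i S hi ih =>
    rw [Finset.forall_mem_insert] at hf
    simp only [Finset.sum_insert hi]
    rw [rectIntegral_add hf.1 (continuousOn_finsetSum S hf.2), ih hf.2]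

theorem rectIntegral_eq_zero (hf : DifferentiableOn ℂ f ([[a, b]] ×ℂ [[c, d]])) :
    rectIntegral f a b c d = 0 := by
  simpa [rectIntegral] using
    integral_boundary_rect_eq_zero_of_differentiableOn f (a + c * I) (b + d * I) (by simpa using hf)

theorem integral_horizontal_eq_sub {F : ℂ → ℂ} {y : ℝ}
    (hF : ∀ x ∈ [[a, b]], HasDerivAt F (f (x + y * I)) (x + y * I))
    (hf : ContinuousOn (fun x : ℝ => f (x + y * I)) [[a, b]]) :
    ∫ x : ℝ in a..b, f (x + y * I) = F (b + y * I) - F (a + y * I) := by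
  refine intervalIntegral.integral_eq_sub_of_hasDerivAt (f := fun x : ℝ => F (x + y * I))
    (fun x hx => ?_) hf.intervalIntegrable
  rw [← mul_one (f _)]
  exact (hF x hx).comp x ((Complex.ofRealCLM.hasDerivAt (x := x)).add_const (y * I))

theorem I_mul_integral_vertical_eq_sub {F : ℂ → ℂ} {x : ℝ}
    (hF : ∀ y ∈ [[c, d]], HasDerivAt F (f (x + y * I)) (x + y * I))
    (hf : ContinuousOn (fun y : ℝ => f (x + y * I)) [[c, d]]) :
    I * ∫ y : ℝ in c..d, f (x + y * I) = F (x + d * I) - F (x + c * I) := by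
  rw [← intervalIntegral.integral_const_mul]
  refine intervalIntegral.integral_eq_sub_of_hasDerivAt (f := fun y : ℝ => F (x + y * I))
    (fun y hy => ?_) (continuousOn_const.mul hf).intervalIntegrable
  rw [mul_comm]
  exact (hF y hy).comp y (by
    simpa using ((Complex.ofRealCLM.hasDerivAt (x := y)).mul_const I).const_add (x : ℂ))

theorem log_sub_log_neg_of_im_pos {z : ℂ} (h : 0 < z.im) : log z - log (-z) = Real.pi * I := by
  simp only [Complex.log, norm_neg, arg_neg_eq_arg_sub_pi_of_im_pos h]
  push_cast
  ring

theorem log_sub_log_neg_of_im_neg {z : ℂ} (h : z.im < 0) : log z - log (-z) = -(Real.pi * I) := by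
  simp only [Complex.log, norm_neg, arg_neg_eq_arg_add_pi_of_im_neg h]
  push_cast
  ring

theorem hasDerivAt_log_sub {ρ z : ℂ} (h : z - ρ ∈ slitPlane) :
    HasDerivAt (fun w => log (w - ρ)) (z - ρ)⁻¹ z := by
  simpa using ((hasDerivAt_id z).sub_const ρ).clog h

theorem hasDerivAt_log_sub_neg {ρ z : ℂ} (h : -(z - ρ) ∈ slitPlane) :
    HasDerivAt (fun w => log (-(w - ρ))) (z - ρ)⁻¹ z := by
  simpa only [neg_div_neg_eq, one_div, Pi.neg_apply, id] using
    ((hasDerivAt_id z).sub_const ρ).neg.clog h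

theorem continuousOn_inv_sub_rectBoundary {ρ : ℂ} (hρ : ρ ∈ Ioo a b ×ℂ Ioo c d) :
    ContinuousOn (fun z => (z - ρ)⁻¹) (rectBoundary a b c d) :=
  ContinuousOn.inv₀ (by fun_prop) fun _ hz => sub_ne_zero.mpr (ne_of_mem_rectBoundary hz hρ)

/- `log (z - ρ)` is an antiderivative on the bottom, right and top sides, `log (ρ - z)` on the left
side; at the two left corners they differ by `± πi`. -/
theorem rectIntegral_inv_sub {ρ : ℂ} (hρ : ρ ∈ Ioo a b ×ℂ Ioo c d) :
    rectIntegral (fun z => (z - ρ)⁻¹) a b c d = 2 * Real.pi * I := by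
  have hcont := continuousOn_inv_sub_rectBoundary hρ
  obtain ⟨⟨ha, hb⟩, hc, hd⟩ := hρ
  have bottom := integral_horizontal_eq_sub (a := a) (b := b) (f := fun z => (z - ρ)⁻¹)
    (fun x _ => hasDerivAt_log_sub (.inr (by simpa [sub_eq_zero] using hc.ne)))
    (continuousOn_horizontal_side hcont (.inl rfl))
  have top := integral_horizontal_eq_sub (a := a) (b := b) (f := fun z => (z - ρ)⁻¹)
    (fun x _ => hasDerivAt_log_sub (.inr (by simpa [sub_eq_zero] using hd.ne')))
    (continuousOn_horizontal_side hcont (.inr rfl))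
  have right := I_mul_integral_vertical_eq_sub (c := c) (d := d) (f := fun z => (z - ρ)⁻¹)
    (fun y _ => hasDerivAt_log_sub (.inl (by simpa using hb)))
    (continuousOn_vertical_side hcont (.inr rfl))
  have left := I_mul_integral_vertical_eq_sub (c := c) (d := d) (f := fun z => (z - ρ)⁻¹)
    (fun y _ => hasDerivAt_log_sub_neg (.inl (by simpa using ha)))
    (continuousOn_vertical_side hcont (.inl rfl))
  have upper := log_sub_log_neg_of_im_pos (z := a + d * I - ρ) (by simpa using hd)
  have lower := log_sub_log_neg_of_im_neg (z := a + c * I - ρ) (by simpa using hc)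
  rw [rectIntegral, bottom, top, right, left]
  linear_combination upper - lower

theorem rectIntegral_logDeriv (hab : a ≤ b) (hcd : c ≤ d)
    (hf : AnalyticOnNhd ℂ f (Icc a b ×ℂ Icc c d)) {S : Finset ℂ}
    (hS : ∀ ρ ∈ S, ρ ∈ Ioo a b ×ℂ Ioo c d) (hord : ∀ ρ ∈ S, analyticOrderAt f ρ ≠ ⊤)
    (hz : ∀ z ∈ Icc a b ×ℂ Icc c d, f z = 0 → z ∈ S) :
    rectIntegral (logDeriv f) a b c d =
      2 * Real.pi * I * ∑ ρ ∈ S, (analyticOrderNatAt f ρ : ℂ) := by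
  have hSK : ∀ ρ ∈ S, ρ ∈ Icc a b ×ℂ Icc c d := fun ρ hρ =>
    ⟨Ioo_subset_Icc_self (hS ρ hρ).1, Ioo_subset_Icc_self (hS ρ hρ).2⟩
  obtain ⟨g, hfg, hg, hgS⟩ := exists_eq_prod_sub_pow_mul (fun ρ hρ => hf ρ (hSK ρ hρ)) hord
  have g_ne_zero : ∀ z ∈ Icc a b ×ℂ Icc c d, g z ≠ 0 := fun z hzK h0 =>
    hgS z (hz z hzK (by rw [hfg z, h0, mul_zero])) h0
  have hlog : DifferentiableOn ℂ (logDeriv g) (Icc a b ×ℂ Icc c d) := fun z hzK =>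
    ((hg z (hf z hzK)).deriv.div (hg z (hf z hzK)) (g_ne_zero z hzK)).differentiableAt
      |>.differentiableWithinAt
  have hB := rectBoundary_subset hab hcd
  have hterm : ∀ ρ ∈ S, ContinuousOn (fun z => (analyticOrderNatAt f ρ : ℂ) * (z - ρ)⁻¹)
      (rectBoundary a b c d) := fun ρ hρ =>
    continuousOn_const.mul (continuousOn_inv_sub_rectBoundary (hS ρ hρ))
  have hsplit : EqOn (logDeriv f)
      (fun z => ∑ ρ ∈ S, (analyticOrderNatAt f ρ : ℂ) * (z - ρ)⁻¹ + logDeriv g z)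
      (rectBoundary a b c d) := fun z hzB =>
    logDeriv_prod_sub_pow_mul hfg (fun h => ne_of_mem_rectBoundary hzB (hS z h) rfl)
      (hg z (hf z (hB hzB))).differentiableAt (g_ne_zero z (hB hzB))
  rw [rectIntegral_congr hsplit, rectIntegral_add (continuousOn_finsetSum S hterm)
    (hlog.continuousOn.mono hB), rectIntegral_finset_sum hterm,
    rectIntegral_eq_zero (by rwa [uIcc_of_le hab, uIcc_of_le hcd]), add_zero, Finset.mul_sum]
  refine Finset.sum_congr rfl fun ρ hρ => ?_
  rw [rectIntegral_const_mul, rectIntegral_inv_sub (hS ρ hρ), mul_comm]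

end RectangleIntegral

section HorizontalSegment

open Complex Set Filter Topology Metric
open scoped Interval

theorem abs_arg_sub_arg_le_pi {z w : ℂ} (h : 0 < z.im ∧ 0 < w.im ∨ z.im < 0 ∧ w.im < 0) :
    |z.arg - w.arg| ≤ Real.pi := by
  have := arg_le_pi z
  have := arg_le_pi w
  have := neg_pi_lt_arg z
  have := neg_pi_lt_arg w
  rcases h with ⟨hz, hw⟩ | ⟨hz, hw⟩
  · have := arg_nonneg_iff.mpr hz.le
    have := arg_nonneg_iff.mpr hw.le
    rw [abs_le]; constructor <;> linarith
  · have := arg_neg_iff.mpr hz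
    have := arg_neg_iff.mpr hw
    rw [abs_le]; constructor <;> linarith

theorem abs_im_integral_inv_sub_le {ρ : ℂ} {a b y : ℝ}
    (h : ∀ x ∈ [[a, b]], (x : ℂ) + y * I ≠ ρ) :
    |(∫ x : ℝ in a..b, ((x : ℂ) + y * I - ρ)⁻¹).im| ≤ Real.pi := by
  rcases eq_or_ne y ρ.im with hy | hy
  · have hreal : ∀ x : ℝ, ((x : ℂ) + y * I - ρ)⁻¹ = (((x - ρ.re)⁻¹ : ℝ) : ℂ) := fun x => by
      rw [ofReal_inv]
      congr 1
      apply Complex.ext <;> simp [hy]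
    simp only [hreal]
    rw [intervalIntegral.integral_ofReal]
    simp [Real.pi_pos.le]
  · rw [integral_horizontal_eq_sub (f := fun z => (z - ρ)⁻¹) (F := fun w => log (w - ρ))
      (fun x _ => hasDerivAt_log_sub (.inr (by simpa [sub_eq_zero] using hy)))
      (ContinuousOn.inv₀ (by fun_prop) fun x hx => sub_ne_zero.mpr (h x hx)),
      sub_im, log_im, log_im]
    apply abs_arg_sub_arg_le_pi
    rcases hy.lt_or_gt with h | h
    · exact .inr (by simpa using h)
    · exact .inl (by simpa using h)

theorem exists_log_of_ne_zero_on_ball {g : ℂ → ℂ} {c : ℂ} {r : ℝ}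
    (hg : DifferentiableOn ℂ g (ball c r)) (hg0 : ∀ z ∈ ball c r, g z ≠ 0) :
    ∃ l : ℂ → ℂ, l c = 0 ∧ ∀ z ∈ ball c r,
      HasDerivAt l (logDeriv g z) z ∧ g z = exp (l z) * g c := by
  have hdiff : ∀ z ∈ ball c r, DifferentiableAt ℂ g z := fun z hz =>
    hg.differentiableAt (isOpen_ball.mem_nhds hz)
  obtain ⟨l, hlc, hl⟩ := (DifferentiableOn.isExactOn_ball
    ((hg.deriv isOpen_ball).div hg hg0)).with_val_at c 0
  refine ⟨l, hlc, fun z hz => ⟨hl z hz, ?_⟩⟩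
  have hder : ∀ w ∈ ball c r, HasDerivWithinAt (fun w => g w * exp (-l w)) 0 (ball c r) w := by
    intro w hw
    have h := ((hdiff w hw).hasDerivAt.mul (hl w hw).neg.cexp).hasDerivWithinAt (s := ball c r)
    refine h.congr_deriv ?_
    have := hg0 w hw
    simp only [Pi.div_apply, Pi.neg_apply]
    field_simp
    ring
  have hconst := (convex_ball c r).norm_image_sub_le_of_norm_hasDerivWithin_le (C := 0) hder
    (by simp) (mem_ball_self (pos_of_mem_ball hz)) hz
  rw [zero_mul, norm_le_zero_iff, sub_eq_zero, hlc, neg_zero, exp_zero, mul_one] at hconst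
  rw [← hconst, mul_left_comm, ← exp_add, add_neg_cancel, exp_zero, mul_one]

theorem exists_log_norm_le {g : ℂ → ℂ} {c : ℂ} {r M : ℝ}
    (hg : DifferentiableOn ℂ g (ball c r)) (hg0 : ∀ z ∈ ball c r, g z ≠ 0) (hr : 0 < r)
    (hM : 1 < M) (hbound : ∀ z ∈ ball c r, ‖g z‖ ≤ M * ‖g c‖) :
    ∃ l : ℂ → ℂ, (∀ z ∈ ball c r, HasDerivAt l (logDeriv g z) z) ∧
      ∀ z ∈ closedBall c (r / 2), ‖l z‖ ≤ 2 * Real.log M := by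
  obtain ⟨l, hlc, hl⟩ := exists_log_of_ne_zero_on_ball hg hg0
  refine ⟨l, fun z hz => (hl z hz).1, fun z hz => ?_⟩
  have hlogM : 0 < Real.log M := Real.log_pos hM
  have hre : ∀ w ∈ ball c r, (l w).re ≤ Real.log M := by
    intro w hw
    have h := hbound w hw
    rw [(hl w hw).2, norm_mul, norm_exp] at h
    rw [Real.le_log_iff_exp_le (by linarith)]
    exact le_of_mul_le_mul_right h (norm_pos_iff.mpr (hg0 c (mem_ball_self hr)))
  have hshift : ∀ w ∈ ball (0 : ℂ) r, c + w ∈ ball c r := fun w hw => by simpa using hw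
  have hz' : ‖z - c‖ ≤ r / 2 := by rwa [← dist_eq_norm]
  have hBC := borelCaratheodory_zero (f := fun w => l (c + w)) (R := r) (z := z - c) hlogM
    (fun w hw => (((hl _ (hshift w hw)).1.differentiableAt.comp w
      (by fun_prop : DifferentiableAt ℂ (fun w => c + w) w)).differentiableWithinAt))
    (fun w hw => hre _ (hshift w hw)) hr (mem_ball_zero_iff.mpr (by linarith)) (by simp [hlc])
  rw [add_sub_cancel] at hBC
  refine hBC.trans ?_
  rw [div_le_iff₀ (by linarith)]
  nlinarith

/- On the sphere `‖z - c‖ = R` each `z - ρ` is at least three times as large as `c - ρ`. -/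
theorem three_pow_mul_norm_le {f g : ℂ → ℂ} {c : ℂ} {R M : ℝ} {S : Finset ℂ} {n : ℂ → ℕ}
    (hR : 0 < R) (hS : ∀ ρ ∈ S, ρ ∈ closedBall c (R / 4))
    (hfg : ∀ z, f z = (∏ ρ ∈ S, (z - ρ) ^ n ρ) * g z) (hg : DifferentiableOn ℂ g (closedBall c R))
    (hc : f c ≠ 0) (hbound : ∀ z ∈ closedBall c R, ‖f z‖ ≤ M * ‖f c‖)
    {z : ℂ} (hz : z ∈ closedBall c R) :
    3 ^ (∑ ρ ∈ S, n ρ) * ‖g z‖ ≤ M * ‖g c‖ := by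
  set P : ℂ → ℂ := fun z => ∏ ρ ∈ S, (z - ρ) ^ n ρ
  have hPc : 0 < ‖P c‖ := norm_pos_iff.mpr (left_ne_zero_of_mul (hfg c ▸ hc))
  have three_mul_dist_le : ∀ w ∈ sphere c R, ∀ ρ ∈ S, 3 * ‖c - ρ‖ ≤ ‖w - ρ‖ := by
    intro w hw ρ hρ
    have h₁ : ‖c - ρ‖ ≤ R / 4 := by rw [← dist_eq_norm']; exact hS ρ hρ
    have h₂ : ‖w - c‖ = R := by simpa [dist_eq_norm] using hw
    have h₃ : ‖w - c‖ ≤ ‖w - ρ‖ + ‖c - ρ‖ := by simpa using norm_sub_le (w - ρ) (c - ρ)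
    linarith
  have hP : ∀ w ∈ sphere c R, 3 ^ (∑ ρ ∈ S, n ρ) * ‖P c‖ ≤ ‖P w‖ := by
    intro w hw
    simp only [P, norm_prod, norm_pow]
    rw [← Finset.prod_pow_eq_pow_sum, ← Finset.prod_mul_distrib]
    refine Finset.prod_le_prod (fun ρ _ => by positivity) fun ρ hρ => ?_
    rw [← mul_pow]
    exact pow_le_pow_left₀ (by positivity) (three_mul_dist_le w hw ρ hρ) _
  have hsphere : ∀ w ∈ sphere c R, ‖g w‖ ≤ M * ‖g c‖ / 3 ^ (∑ ρ ∈ S, n ρ) := by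
    intro w hw
    have hfw := hbound w (sphere_subset_closedBall hw)
    rw [hfg w, hfg c, norm_mul, norm_mul] at hfw
    rw [le_div_iff₀ (by positivity)]
    refine le_of_mul_le_mul_right ?_ hPc
    calc ‖g w‖ * 3 ^ (∑ ρ ∈ S, n ρ) * ‖P c‖ = 3 ^ (∑ ρ ∈ S, n ρ) * ‖P c‖ * ‖g w‖ := by ring
      _ ≤ ‖P w‖ * ‖g w‖ := mul_le_mul_of_nonneg_right (hP w hw) (norm_nonneg _)
      _ ≤ M * ‖g c‖ * ‖P c‖ := by linarith
  have hmax := norm_le_of_forall_mem_frontier_norm_le (U := ball c R) isBounded_ball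
    (DifferentiableOn.diffContOnCl (by rwa [closure_ball _ hR.ne']))
    (by rwa [frontier_ball _ hR.ne']) (z := z) (by rwa [closure_ball _ hR.ne'])
  rwa [le_div_iff₀ (by positivity), mul_comm] at hmax

theorem exists_finset_zeros_ball_quarter {f : ℂ → ℂ} {c : ℂ} {R : ℝ} (hR : 0 < R)
    (hf : AnalyticOnNhd ℂ f (closedBall c R)) (hc : f c ≠ 0) :
    ∃ (S : Finset ℂ) (n : ℂ → ℕ) (g : ℂ → ℂ),
      (∀ ρ ∈ S, ρ ∈ closedBall c (R / 4) ∧ f ρ = 0) ∧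
      (∀ z, f z = (∏ ρ ∈ S, (z - ρ) ^ n ρ) * g z) ∧
      AnalyticOnNhd ℂ g (closedBall c R) ∧ ∀ z ∈ closedBall c (R / 4), g z ≠ 0 := by
  have hc_mem : c ∈ closedBall c R := mem_closedBall_self hR.le
  have hsub : closedBall c (R / 4) ⊆ closedBall c R := closedBall_subset_closedBall (by linarith)
  have hord : ∀ z ∈ closedBall c R, analyticOrderAt f z ≠ ⊤ := fun z hz =>
    hf.analyticOrderAt_ne_top_of_isPreconnected (convex_closedBall c R).isPreconnected hc_mem hz
      (by simp [(hf c hc_mem).analyticOrderAt_eq_zero.mpr hc])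
  have hfin := finite_zeros_of_isCompact (isCompact_closedBall c (R / 4)) (hf.mono hsub)
    fun z hz => hord z (hsub hz)
  have hmem : ∀ z, z ∈ hfin.toFinset ↔ z ∈ closedBall c (R / 4) ∧ f z = 0 := by simp
  obtain ⟨g, hfg, hg, hgS⟩ := exists_eq_prod_sub_pow_mul (S := hfin.toFinset)
    (fun ρ hρ => hf ρ (hsub ((hmem ρ).mp hρ).1)) fun ρ hρ => hord ρ (hsub ((hmem ρ).mp hρ).1)
  refine ⟨_, _, g, fun ρ hρ => (hmem ρ).mp hρ, hfg, fun z hz => hg z (hf z hz), fun z hz h0 => ?_⟩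
  exact hgS z ((hmem z).mpr ⟨hz, by rw [hfg z, h0, mul_zero]⟩) h0

theorem exists_logDeriv_local_expansion {f : ℂ → ℂ} {c : ℂ} {R M : ℝ} (hR : 0 < R)
    (hf : AnalyticOnNhd ℂ f (closedBall c R)) (hM : 1 < M) (hc : f c ≠ 0)
    (hbound : ∀ z ∈ closedBall c R, ‖f z‖ ≤ M * ‖f c‖) :
    ∃ (S : Finset ℂ) (n : ℂ → ℕ) (l : ℂ → ℂ), (∀ ρ ∈ S, f ρ = 0) ∧
      ∑ ρ ∈ S, (n ρ : ℝ) ≤ Real.log M ∧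
      (∀ z ∈ ball c (R / 4), f z ≠ 0 →
        HasDerivAt l (logDeriv f z - ∑ ρ ∈ S, (n ρ : ℂ) * (z - ρ)⁻¹) z) ∧
      ∀ z ∈ closedBall c (R / 8), ‖l z‖ ≤ 2 * Real.log M := by
  obtain ⟨S, n, g, hS, hfg, hg, hg0⟩ := exists_finset_zeros_ball_quarter hR hf hc
  have hgc : 0 < ‖g c‖ := norm_pos_iff.mpr (right_ne_zero_of_mul (hfg c ▸ hc))
  have hpow : ∀ z ∈ closedBall c R, 3 ^ (∑ ρ ∈ S, n ρ) * ‖g z‖ ≤ M * ‖g c‖ := fun z hz =>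
    three_pow_mul_norm_le hR (fun ρ hρ => (hS ρ hρ).1) hfg
      (fun w hw => (hg w hw).differentiableAt.differentiableWithinAt) hc hbound hz
  have hsub : ball c (R / 4) ⊆ closedBall c R :=
    ball_subset_closedBall.trans (closedBall_subset_closedBall (by linarith))
  obtain ⟨l, hl, hlM⟩ := exists_log_norm_le (g := g) (c := c) (r := R / 4)
    (fun z hz => (hg z (hsub hz)).differentiableAt.differentiableWithinAt)
    (fun z hz => hg0 z (ball_subset_closedBall hz)) (by linarith) hM fun z hz =>
      (le_mul_of_one_le_left (norm_nonneg _) (one_le_pow₀ (by norm_num))).trans (hpow z (hsub hz))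
  refine ⟨S, n, l, fun ρ hρ => (hS ρ hρ).2, ?_, fun z hz hfz => ?_, fun z hz => hlM z ?_⟩
  · have h3M : (3 : ℝ) ^ (∑ ρ ∈ S, n ρ) ≤ M :=
      le_of_mul_le_mul_right (hpow c (mem_closedBall_self hR.le)) hgc
    have hlog := Real.log_le_log (by positivity) h3M
    rw [Real.log_pow, Nat.cast_sum] at hlog
    have one_le_log_three : 1 ≤ Real.log 3 := by
      rw [Real.le_log_iff_exp_le (by norm_num)]
      linarith [Real.exp_one_lt_d9]
    exact (le_mul_of_one_le_right (by positivity) one_le_log_three).trans hlog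
  · rw [logDeriv_prod_sub_pow_mul hfg (fun h => hfz (hS z h).2)
      (hg z (hsub hz)).differentiableAt (hg0 z (ball_subset_closedBall hz)), add_sub_cancel_left]
    exact hl z hz
  · rwa [show R / 4 / 2 = R / 8 by ring]

theorem abs_im_integral_logDeriv_le {f : ℂ → ℂ} {c : ℂ} {R M : ℝ} (hR : 0 < R)
    (hf : AnalyticOnNhd ℂ f (closedBall c R)) (hM : 1 < M) (hc : f c ≠ 0)
    (hbound : ∀ z ∈ closedBall c R, ‖f z‖ ≤ M * ‖f c‖) {a b y : ℝ}
    (hab : ∀ x ∈ [[a, b]], (x : ℂ) + y * I ∈ closedBall c (R / 8))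
    (hne : ∀ x ∈ [[a, b]], f (x + y * I) ≠ 0) :
    |(∫ x : ℝ in a..b, logDeriv f (x + y * I)).im| ≤ 8 * Real.log M := by
  obtain ⟨S, n, l, hS, hn, hl, hlM⟩ := exists_logDeriv_local_expansion hR hf hM hc hbound
  have hneS : ∀ x ∈ [[a, b]], ∀ ρ ∈ S, (x : ℂ) + y * I ≠ ρ := fun x hx ρ hρ h =>
    hne x hx (h ▸ hS ρ hρ)
  have hcont : ContinuousOn (fun x : ℝ => logDeriv f (x + y * I)) [[a, b]] := fun x hx => by
    have hfx := hf _ (closedBall_subset_closedBall (by linarith) (hab x hx))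
    exact (ContinuousAt.comp (f := fun x : ℝ => (x : ℂ) + y * I)
      (hfx.deriv.div hfx (hne x hx)).continuousAt (by fun_prop)).continuousWithinAt
  have hcont_inv : ∀ ρ ∈ S,
      ContinuousOn (fun x : ℝ => (n ρ : ℂ) * ((x : ℂ) + y * I - ρ)⁻¹) [[a, b]] := fun ρ hρ =>
    continuousOn_const.mul
      (ContinuousOn.inv₀ (by fun_prop) fun x hx => sub_ne_zero.mpr (hneS x hx ρ hρ))
  have hFTC := integral_horizontal_eq_sub (F := l)
    (f := fun z => logDeriv f z - ∑ ρ ∈ S, (n ρ : ℂ) * (z - ρ)⁻¹)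
    (fun x hx => hl _ (closedBall_subset_ball (by linarith) (hab x hx)) (hne x hx))
    (hcont.sub (continuousOn_finsetSum S hcont_inv))
  rw [intervalIntegral.integral_sub hcont.intervalIntegrable
      (continuousOn_finsetSum S hcont_inv).intervalIntegrable,
    intervalIntegral.integral_finsetSum fun ρ hρ => (hcont_inv ρ hρ).intervalIntegrable,
    sub_eq_iff_eq_add] at hFTC
  have hzeros : |(∑ ρ ∈ S, ∫ x : ℝ in a..b, (n ρ : ℂ) * ((x : ℂ) + y * I - ρ)⁻¹).im| ≤
      4 * Real.log M := by
    calc _ ≤ ∑ ρ ∈ S, (n ρ : ℝ) * 4 := by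
          rw [im_sum]
          refine (Finset.abs_sum_le_sum_abs _ _).trans (Finset.sum_le_sum fun ρ hρ => ?_)
          rw [intervalIntegral.integral_const_mul, ← ofReal_natCast, im_ofReal_mul, abs_mul,
            Nat.abs_cast]
          gcongr
          exact (abs_im_integral_inv_sub_le fun x hx => hneS x hx ρ hρ).trans Real.pi_le_four
      _ ≤ 4 * Real.log M := by rw [← Finset.sum_mul]; linarith
  have hends : |(l (b + y * I) - l (a + y * I)).im| ≤ 4 * Real.log M :=
    (abs_im_le_norm _).trans ((norm_sub_le _ _).trans (by
      linarith [hlM _ (hab b right_mem_uIcc), hlM _ (hab a left_mem_uIcc)]))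
  rw [hFTC, add_im]
  exact (abs_add_le _ _).trans (by linarith)

end HorizontalSegment

section LogGamma

open Complex Set Filter Topology

theorem norm_log_one_add_sub_le_of_re_nonneg {z : ℂ} (hz : 0 ≤ z.re) :
    ‖log (1 + z) - z‖ ≤ ‖z‖ ^ 2 := by
  set s : Set ℂ := {w | 0 ≤ w.re} ∩ Metric.closedBall 0 ‖z‖
  have hs : Convex ℝ s := (convex_halfSpace_re_ge 0).inter (convex_closedBall _ _)
  have one_le : ∀ w ∈ s, 1 ≤ ‖1 + w‖ := fun w hw =>
    le_trans (by simpa using hw.1) (re_le_norm _)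
  have hder : ∀ w ∈ s, HasDerivWithinAt (fun w : ℂ => log (1 + w) - w) (-w / (1 + w)) s w := by
    intro w hw
    have hne : 1 + w ≠ 0 := norm_pos_iff.mp (one_pos.trans_le (one_le w hw))
    have hslit : 1 + w ∈ slitPlane :=
      .inl (by simpa using lt_of_lt_of_le one_pos (le_add_of_nonneg_right hw.1))
    have h := (((hasDerivAt_id w).const_add 1).clog hslit).sub (hasDerivAt_id w)
    exact (h.congr_deriv (by simp only [id]; field_simp; ring)).hasDerivWithinAt
  have hbound : ∀ w ∈ s, ‖-w / (1 + w)‖ ≤ ‖z‖ := fun w hw => by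
    rw [norm_div, norm_neg]
    exact (div_le_self (norm_nonneg _) (one_le w hw)).trans (mem_closedBall_zero_iff.mp hw.2)
  simpa [pow_two] using hs.norm_image_sub_le_of_norm_hasDerivWithin_le hder hbound
    (x := 0) (y := z) ⟨by simp, by simp⟩ ⟨hz, by simp⟩

/-- The `k`-th term of Euler's series for `log Γ(s)`. -/
noncomputable def logGammaTerm (k : ℕ) (s : ℂ) : ℂ :=
  s * (Real.log (1 + 1 / ((k : ℝ) + 1)) : ℝ) - log (1 + s / ((k : ℂ) + 1))

/-- The holomorphic branch of `log Γ` on the right half-plane that is real on the positive axis,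
given by Euler's series. -/
noncomputable def logGamma (s : ℂ) : ℂ := -log s + ∑' k : ℕ, logGammaTerm k s

theorem norm_natCast_add_one (k : ℕ) : ‖(k : ℂ) + 1‖ = k + 1 := by
  exact_mod_cast norm_natCast (k + 1)

theorem re_div_natCast_add_one_pos {s : ℂ} (hs : 0 < s.re) (k : ℕ) :
    0 < (s / ((k : ℂ) + 1)).re := by
  have h := div_natCast_re s (k + 1)
  rw [Nat.cast_add_one, Nat.cast_add_one] at h
  rw [h]
  positivity

theorem norm_logGammaTerm_le {s : ℂ} (hs : 0 < s.re) (k : ℕ) :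
    ‖logGammaTerm k s‖ ≤ (‖s‖ + ‖s‖ ^ 2) * (1 / ((k : ℝ) + 1) ^ 2) := by
  have hterm := norm_log_one_add_sub_le_of_re_nonneg (re_div_natCast_add_one_pos hs k).le
  have hlog := norm_log_one_add_sub_le_of_re_nonneg
    (re_div_natCast_add_one_pos (s := 1) (by simp) k).le
  rw [norm_div, norm_natCast_add_one] at hterm hlog
  have hsplit : logGammaTerm k s = s * (log (1 + 1 / ((k : ℂ) + 1)) - 1 / ((k : ℂ) + 1)) -
      (log (1 + s / ((k : ℂ) + 1)) - s / ((k : ℂ) + 1)) := by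
    rw [logGammaTerm, ofReal_log (by positivity)]
    push_cast
    ring
  rw [hsplit]
  calc _ ≤ ‖s‖ * (‖(1 : ℂ)‖ / (k + 1)) ^ 2 + (‖s‖ / (k + 1)) ^ 2 := by
        refine (norm_sub_le _ _).trans ?_
        rw [norm_mul]
        gcongr
    _ = _ := by rw [norm_one]; field_simp

theorem summable_const_mul_one_div_add_one_sq (C : ℝ) :
    Summable fun k : ℕ => C * (1 / ((k : ℝ) + 1) ^ 2) :=
  Summable.mul_left _ (by
    simpa using (summable_nat_add_iff 1).2 (Real.summable_one_div_nat_pow.2 one_lt_two))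

theorem differentiableAt_logGammaTerm {s : ℂ} (hs : 0 < s.re) (k : ℕ) :
    DifferentiableAt ℂ (logGammaTerm k) s := by
  have : 1 + s / ((k : ℂ) + 1) ∈ slitPlane :=
    .inl (by rw [add_re, one_re]; linarith [re_div_natCast_add_one_pos hs k])
  unfold logGammaTerm
  exact (by fun_prop : DifferentiableAt ℂ (fun s : ℂ =>
    s * ((Real.log (1 + 1 / ((k : ℝ) + 1)) : ℝ) : ℂ)) s).sub
      (DifferentiableAt.clog (by fun_prop) this)

theorem differentiableAt_logGamma {s : ℂ} (hs : 0 < s.re) : DifferentiableAt ℂ logGamma s := by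
  set R := ‖s‖ + 1
  have hU : IsOpen ({z : ℂ | 0 < z.re} ∩ Metric.ball 0 R) :=
    (isOpen_lt continuous_const continuous_re).inter Metric.isOpen_ball
  have hbound : ∀ (k : ℕ) (z : ℂ), z ∈ {z : ℂ | 0 < z.re} ∩ Metric.ball 0 R →
      ‖logGammaTerm k z‖ ≤ (R + R ^ 2) * (1 / ((k : ℝ) + 1) ^ 2) := fun k z hz => by
    have hzR := (mem_ball_zero_iff.mp hz.2).le
    refine (norm_logGammaTerm_le hz.1 k).trans ?_
    gcongr
  have hsum := differentiableOn_tsum_of_summable_norm (F := logGammaTerm)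
    (summable_const_mul_one_div_add_one_sq (R + R ^ 2))
    (fun k z hz => (differentiableAt_logGammaTerm hz.1 k).differentiableWithinAt) hU hbound
  exact (differentiableAt_id.clog (.inl hs)).neg.add
    (hsum.differentiableAt (hU.mem_nhds ⟨hs, by simp [R]⟩))

theorem tendsto_logGamma {s : ℂ} (hs : 0 < s.re) :
    Tendsto (fun n : ℕ => -log s + ∑ k ∈ Finset.range n, logGammaTerm k s) atTop
      (𝓝 (logGamma s)) :=
  (Summable.of_norm_bounded (summable_const_mul_one_div_add_one_sq _)
    (norm_logGammaTerm_le hs)).hasSum.tendsto_sum_nat.const_add _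

theorem log_natCast_add_two_eq (n : ℕ) :
    Real.log (((n + 1 : ℕ) : ℝ) + 1) = Real.log (n + 1) + Real.log (1 + 1 / ((n : ℝ) + 1)) := by
  rw [← Real.log_mul (by positivity) (by positivity)]
  congr 1
  push_cast
  field_simp

theorem add_natCast_ne_zero_of_re_pos {s : ℂ} (hs : 0 < s.re) (j : ℕ) : s + j ≠ 0 := fun h => by
  have := congrArg re h
  rw [add_re, natCast_re, zero_re] at this
  linarith [Nat.cast_nonneg (α := ℝ) j]

theorem exp_partial_sum_logGamma {s : ℂ} (hs : 0 < s.re) (n : ℕ) :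
    exp (-log s + ∑ k ∈ Finset.range n, logGammaTerm k s) =
      exp (s * (Real.log (n + 1) : ℝ)) * n.factorial / ∏ j ∈ Finset.range (n + 1), (s + j) := by
  have hne := add_natCast_ne_zero_of_re_pos hs
  induction n with
  | zero =>
    have hs0 : s ≠ 0 := by simpa using hne 0
    simp [exp_neg, exp_log hs0]
  | succ n ih =>
    have hn : (n : ℂ) + 1 ≠ 0 := Nat.cast_add_one_ne_zero n
    have hquot : 1 + s / ((n : ℂ) + 1) = (s + (n + 1 : ℕ)) / ((n : ℂ) + 1) := by
      push_cast
      field_simp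
      ring
    rw [Finset.sum_range_succ, ← add_assoc, exp_add, ih, logGammaTerm, hquot, exp_sub,
      exp_log (div_ne_zero (hne _) hn), Finset.prod_range_succ _ (n + 1), Nat.factorial_succ,
      log_natCast_add_two_eq, ofReal_add, mul_add, exp_add]
    have := hne (n + 1)
    have : ∏ j ∈ Finset.range (n + 1), (s + (j : ℂ)) ≠ 0 :=
      Finset.prod_ne_zero_iff.2 fun j _ => hne j
    push_cast at *
    field_simp

theorem exp_logGamma {s : ℂ} (hs : 0 < s.re) : exp (logGamma s) = Gamma s := by
  have hexp := (continuous_exp.tendsto _).comp (tendsto_logGamma hs)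
  have hratio : Tendsto (fun n : ℕ => exp (s * ((Real.log (n + 1) - Real.log n : ℝ) : ℂ))) atTop
      (𝓝 1) := by
    have h := (continuous_ofReal.tendsto _).comp Real.tendsto_log_nat_add_one_sub_log
    simpa [Function.comp_def] using (continuous_exp.tendsto _).comp (h.const_mul s)
  have hseq := (GammaSeq_tendsto_Gamma s).mul hratio
  rw [mul_one] at hseq
  refine tendsto_nhds_unique hexp (hseq.congr' ?_)
  filter_upwards [eventually_gt_atTop 0] with n hn
  rw [Function.comp_apply, exp_partial_sum_logGamma hs, GammaSeq,
    cpow_def_of_ne_zero (by exact_mod_cast hn.ne'), ← natCast_log,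
    show s * (Real.log (n + 1) : ℝ) =
      (Real.log n : ℝ) * s + s * ((Real.log (n + 1) - Real.log n : ℝ) : ℂ) by push_cast; ring,
    exp_add]
  ring

theorem arg_eq_arctan_of_re_pos {z : ℂ} (hz : 0 < z.re) : z.arg = Real.arctan (z.im / z.re) := by
  have h := abs_lt.mp (abs_arg_lt_pi_div_two_iff.2 (.inl hz))
  rw [← tan_arg, Real.arctan_tan h.1 h.2]

theorem im_partial_sum_logGamma {σ : ℝ} (hσ : 0 < σ) (t : ℝ) (n : ℕ) :
    (-log (σ + t * I) + ∑ k ∈ Finset.range n, logGammaTerm k (σ + t * I)).im =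
      t * Real.log (n + 1) - ∑ k ∈ Finset.range (n + 1), Real.arctan (t / (σ + k)) := by
  induction n with
  | zero => simp [log_im, arg_eq_arctan_of_re_pos, hσ]
  | succ n ih =>
    have hpos := re_div_natCast_add_one_pos (s := σ + t * I) (by simpa using hσ) n
    have hcoord : 1 + ((σ : ℂ) + t * I) / ((n : ℂ) + 1) =
        ((1 + σ / (n + 1) : ℝ) : ℂ) + ((t / (n + 1) : ℝ) : ℂ) * I := by
      push_cast
      ring
    have harg : (log (1 + ((σ : ℂ) + t * I) / ((n : ℂ) + 1))).im =
        Real.arctan (t / (σ + (n + 1 : ℕ))) := by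
      rw [log_im, arg_eq_arctan_of_re_pos (by rw [add_re, one_re]; linarith), hcoord]
      congr 1
      simp only [add_re, add_im, ofReal_re, ofReal_im, re_ofReal_mul, im_ofReal_mul, I_re, I_im,
        mul_zero, mul_one, add_zero, zero_add]
      rw [div_div]
      congr 1
      push_cast
      field_simp
      ring
    rw [Finset.sum_range_succ, ← add_assoc, add_im, ih, Finset.sum_range_succ _ (n + 1),
      log_natCast_add_two_eq, logGammaTerm, sub_im, im_mul_ofReal, harg]
    simp
    ring

theorem tendsto_im_logGamma {σ : ℝ} (hσ : 0 < σ) (t : ℝ) :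
    Tendsto (fun n : ℕ => t * Real.log n -
        ∑ k ∈ Finset.range (n + 1), Real.arctan (t / (σ + k))) atTop
      (𝓝 (logGamma (σ + t * I)).im) := by
  have h := ((continuous_im.tendsto _).comp (tendsto_logGamma (s := σ + t * I)
    (by simpa using hσ))).sub (Real.tendsto_log_nat_add_one_sub_log.const_mul t)
  rw [mul_zero, sub_zero] at h
  refine h.congr fun n => ?_
  rw [Function.comp_apply, im_partial_sum_logGamma hσ]
  ring

theorem im_logGamma_neg {σ : ℝ} (hσ : 0 < σ) (t : ℝ) :
    (logGamma (σ + (-t : ℝ) * I)).im = -(logGamma (σ + t * I)).im := by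
  refine tendsto_nhds_unique (tendsto_im_logGamma hσ (-t))
    ((tendsto_im_logGamma hσ t).neg.congr fun n => ?_)
  simp only [neg_div, Real.arctan_neg, Finset.sum_neg_distrib]
  ring

end LogGamma

section Stirling

open Set Filter Topology

/-- An antiderivative of `x ↦ arctan (t / x)` on the positive axis. -/
noncomputable def arctanDivPrimitive (t x : ℝ) : ℝ :=
  x * Real.arctan (t / x) + t / 2 * Real.log (x ^ 2 + t ^ 2)

theorem hasDerivAt_arctanDivPrimitive (t : ℝ) {x : ℝ} (hx : 0 < x) :
    HasDerivAt (arctanDivPrimitive t) (Real.arctan (t / x)) x := by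
  have hdiv : HasDerivAt (fun x : ℝ => t / x) (-t / x ^ 2) x := by
    simpa [div_eq_mul_inv] using (hasDerivAt_inv hx.ne').const_mul t
  have hsq : HasDerivAt (fun x : ℝ => x ^ 2 + t ^ 2) (2 * x) x := by
    simpa using (hasDerivAt_pow 2 x).add_const (t ^ 2)
  have h := ((hasDerivAt_id x).mul hdiv.arctan).add
    ((hsq.log (by positivity)).const_mul (t / 2))
  refine h.congr_deriv ?_
  have hpyth : 1 + (t / x) ^ 2 = (x ^ 2 + t ^ 2) / x ^ 2 := by field_simp
  rw [hpyth]
  simp only [id]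
  field_simp
  ring

theorem integral_arctan_div (t : ℝ) {a b : ℝ} (ha : 0 < a) (hab : a ≤ b) :
    ∫ x in a..b, Real.arctan (t / x) = arctanDivPrimitive t b - arctanDivPrimitive t a := by
  have hpos : ∀ x ∈ uIcc a b, 0 < x := fun x hx => by
    rw [uIcc_of_le hab] at hx
    exact ha.trans_le hx.1
  refine intervalIntegral.integral_eq_sub_of_hasDerivAt
    (fun x hx => hasDerivAt_arctanDivPrimitive t (hpos x hx))
    (ContinuousOn.intervalIntegrable fun x hx => ?_)
  exact (Real.continuous_arctan.continuousAt.comp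
    (continuousAt_const.div continuousAt_id (hpos x hx).ne')).continuousWithinAt

theorem antitoneOn_arctan_div {t a : ℝ} (ht : 0 ≤ t) (ha : 0 < a) (b : ℝ) :
    AntitoneOn (fun x : ℝ => Real.arctan (t / x)) (Icc a b) := fun _ hx _ _ hxy =>
  Real.arctan_mono (div_le_div_of_nonneg_left ht (ha.trans_le hx.1) hxy)

theorem sum_arctan_div_le {t σ : ℝ} (ht : 0 ≤ t) (hσ : 0 < σ) (n : ℕ) :
    ∑ k ∈ Finset.range (n + 1), Real.arctan (t / (σ + k)) ≤
      arctanDivPrimitive t (n + σ) - arctanDivPrimitive t σ + Real.pi / 2 := by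
  have h := (antitoneOn_arctan_div ht hσ (σ + n)).sum_le_integral
  rw [integral_arctan_div t hσ (by simp), add_comm σ] at h
  rw [Finset.sum_range_succ']
  exact add_le_add h (Real.arctan_lt_pi_div_two _).le

theorem le_sum_arctan_div {t σ : ℝ} (ht : 0 ≤ t) (hσ : 0 < σ) (n : ℕ) :
    arctanDivPrimitive t (n + (σ + 1)) - arctanDivPrimitive t σ ≤
      ∑ k ∈ Finset.range (n + 1), Real.arctan (t / (σ + k)) := by
  have h := (antitoneOn_arctan_div ht hσ (σ + (n + 1 : ℕ))).integral_le_sum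
  rw [integral_arctan_div t hσ (le_add_of_nonneg_right (Nat.cast_nonneg _))] at h
  convert h using 3
  push_cast
  ring

theorem tendsto_mul_arctan_div {t : ℝ} (ht : 0 < t) :
    Tendsto (fun y : ℝ => y * Real.arctan (t / y)) atTop (𝓝 t) := by
  have hslope := (by simpa using Real.hasDerivAt_arctan 0 :
    HasDerivAt Real.arctan 1 0).tendsto_slope_zero_right
  have hdiv : Tendsto (fun y : ℝ => t / y) atTop (𝓝[>] 0) :=
    tendsto_nhdsWithin_iff.mpr ⟨tendsto_const_nhds.div_atTop tendsto_id, by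
      filter_upwards [eventually_gt_atTop 0] with y hy using div_pos ht hy⟩
  have h := (hslope.comp hdiv).const_mul t
  rw [mul_one] at h
  refine h.congr' ?_
  filter_upwards [eventually_gt_atTop 0] with y hy
  simp only [Function.comp_apply, zero_add, Real.arctan_zero, sub_zero, smul_eq_mul]
  field_simp

theorem tendsto_arctanDivPrimitive_sub {t c : ℝ} (ht : 0 < t) (hc : 0 < c) :
    Tendsto (fun n : ℕ => arctanDivPrimitive t (n + c) - t * Real.log n) atTop (𝓝 t) := by
  have hadd : Tendsto (fun n : ℕ => (n : ℝ) + c) atTop atTop :=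
    tendsto_atTop_add_const_right _ _ tendsto_natCast_atTop_atTop
  have hdiv : ∀ r : ℝ, Tendsto (fun n : ℕ => r / (n : ℝ)) atTop (𝓝 0) := fun r =>
    tendsto_const_nhds.div_atTop tendsto_natCast_atTop_atTop
  have hone : Tendsto (fun n : ℕ => (1 + c / (n : ℝ)) ^ 2 + (t / n) ^ 2) atTop (𝓝 1) := by
    simpa using (((hdiv c).const_add 1).pow 2).add ((hdiv t).pow 2)
  have h := ((tendsto_mul_arctan_div ht).comp hadd).add
    ((hone.log one_ne_zero).const_mul (t / 2))
  rw [Real.log_one, mul_zero, add_zero] at h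
  refine h.congr' ?_
  filter_upwards [eventually_gt_atTop 0] with n hn
  have : (0 : ℝ) < n := by exact_mod_cast hn
  have hfactor : ((n : ℝ) + c) ^ 2 + t ^ 2 = n ^ 2 * ((1 + c / n) ^ 2 + (t / n) ^ 2) := by
    field_simp
  rw [Function.comp_apply, arctanDivPrimitive, hfactor, Real.log_mul (by positivity)
    (by positivity), Real.log_pow]
  push_cast
  ring

theorem le_arctanDivPrimitive {t σ : ℝ} (ht : 0 < t) (hσ : 0 < σ) :
    t * Real.log t ≤ arctanDivPrimitive t σ := by
  have harctan : 0 ≤ σ * Real.arctan (t / σ) :=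
    mul_nonneg hσ.le (Real.arctan_nonneg.2 (div_pos ht hσ).le)
  have hlog : 2 * Real.log t ≤ Real.log (σ ^ 2 + t ^ 2) := by
    rw [← Nat.cast_two (R := ℝ), ← Real.log_pow]
    exact Real.log_le_log (by positivity) (by nlinarith)
  unfold arctanDivPrimitive
  linarith [mul_le_mul_of_nonneg_left hlog (half_pos ht).le]

theorem arctanDivPrimitive_le {t σ : ℝ} (ht : 1 ≤ t) (hσ : 0 < σ) :
    arctanDivPrimitive t σ ≤ t * Real.log t + 2 * σ + σ ^ 2 := by
  have harctan : σ * Real.arctan (t / σ) ≤ σ * 2 :=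
    mul_le_mul_of_nonneg_left
      ((Real.arctan_lt_pi_div_two _).le.trans (by linarith [Real.pi_le_four])) hσ.le
  have hlog : Real.log (σ ^ 2 + t ^ 2) ≤ 2 * Real.log t + σ ^ 2 / t ^ 2 := by
    have hfactor : σ ^ 2 + t ^ 2 = t ^ 2 * (1 + σ ^ 2 / t ^ 2) := by field_simp; ring
    rw [hfactor, Real.log_mul (by positivity) (by positivity), Real.log_pow, Nat.cast_two]
    linarith [Real.log_le_sub_one_of_pos (x := 1 + σ ^ 2 / t ^ 2) (by positivity)]
  have hrest : t / 2 * (σ ^ 2 / t ^ 2) ≤ σ ^ 2 := by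
    have : t / 2 * (σ ^ 2 / t ^ 2) = σ ^ 2 / (2 * t) := by field_simp
    rw [this]
    exact div_le_self (by positivity) (by linarith)
  unfold arctanDivPrimitive
  linarith [mul_le_mul_of_nonneg_left hlog (by linarith : 0 ≤ t / 2)]

theorem abs_im_logGamma_sub_le {σ t : ℝ} (hσ : 0 < σ) (ht : 1 ≤ t) :
    |(logGamma (σ + t * Complex.I)).im - (t * Real.log t - t)| ≤ (σ + 2) ^ 2 := by
  have ht0 : 0 < t := by linarith
  have hlim := tendsto_im_logGamma hσ t
  have lower : arctanDivPrimitive t σ - Real.pi / 2 - t ≤ (logGamma (σ + t * Complex.I)).im :=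
    le_of_tendsto_of_tendsto'
      ((tendsto_arctanDivPrimitive_sub ht0 hσ).const_sub _) hlim fun n => by
        linarith [sum_arctan_div_le ht0.le hσ n]
  have upper : (logGamma (σ + t * Complex.I)).im ≤ arctanDivPrimitive t σ - t :=
    le_of_tendsto_of_tendsto' hlim
      ((tendsto_arctanDivPrimitive_sub ht0 (by linarith : 0 < σ + 1)).const_sub _) fun n => by
        linarith [le_sum_arctan_div ht0.le hσ n]
  have := le_arctanDivPrimitive ht0 hσ
  have := arctanDivPrimitive_le ht hσ
  rw [abs_le]
  constructor <;> nlinarith [Real.pi_le_four]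

end Stirling

section ShiftIdentity

open Complex Set Filter Topology

/-- The generalized binomial coefficient `binom(-s, k)`. -/
noncomputable def negBinom (s : ℂ) (k : ℕ) : ℂ :=
  (-1) ^ k * (ascPochhammer ℂ k).eval s / k.factorial

@[simp]
theorem negBinom_zero (s : ℂ) : negBinom s 0 = 1 := by simp [negBinom]

@[simp]
theorem negBinom_one (s : ℂ) : negBinom s 1 = -s := by simp [negBinom]

theorem negBinom_succ_mul (s : ℂ) (k : ℕ) :
    negBinom s (k + 1) * (k + 1) = -s * negBinom (s + 1) k := by
  have hk : (k : ℂ) + 1 ≠ 0 := Nat.cast_add_one_ne_zero k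
  have hfac : (k.factorial : ℂ) ≠ 0 := by exact_mod_cast k.factorial_ne_zero
  rw [negBinom, negBinom, ascPochhammer_succ_left, Nat.factorial_succ]
  simp only [Polynomial.eval_mul, Polynomial.eval_X, Polynomial.eval_comp, Polynomial.eval_add,
    Polynomial.eval_one]
  push_cast
  field_simp
  ring

theorem differentiable_negBinom (k : ℕ) : Differentiable ℂ fun s => negBinom s k := by
  unfold negBinom
  fun_prop

/-- The remainder after `n` terms of the Taylor expansion of `h ↦ (x + h)^(-s)` at `0`. -/
noncomputable def cpowTaylorRemainder (n : ℕ) (s : ℂ) (x h : ℝ) : ℂ :=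
  ((x + h : ℝ) : ℂ) ^ (-s) -
    ∑ k ∈ Finset.range n, negBinom s k * (x : ℂ) ^ (-(s + k)) * (h : ℂ) ^ k

theorem hasDerivAt_cpowTaylorRemainder_succ (n : ℕ) (s : ℂ) {x h : ℝ} (hxh : 0 < x + h) :
    HasDerivAt (cpowTaylorRemainder (n + 1) s x) (-s * cpowTaylorRemainder n (s + 1) x h) h := by
  have hpow : HasDerivAt (fun h : ℝ => ((x + h : ℝ) : ℂ) ^ (-s))
      (-s * ((x + h : ℝ) : ℂ) ^ (-(s + 1))) h := by
    have h1 := ((hasDerivAt_id ((x + h : ℝ) : ℂ)).cpow_const (c := -s)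
      (.inl (by simpa using hxh))).comp_ofReal.comp_const_add x h
    refine h1.congr_deriv ?_
    rw [id, mul_one, neg_add']
  have hsum : HasDerivAt
      (fun h : ℝ => ∑ k ∈ Finset.range n,
        negBinom s (k + 1) * (x : ℂ) ^ (-(s + (k + 1 : ℕ))) * (h : ℂ) ^ (k + 1))
      (-s * ∑ k ∈ Finset.range n,
        negBinom (s + 1) k * (x : ℂ) ^ (-(s + 1 + k)) * (h : ℂ) ^ k) h := by
    rw [Finset.mul_sum]
    refine HasDerivAt.fun_sum fun k _ => ?_
    refine ((hasDerivAt_pow (k + 1) (h : ℂ)).comp_ofReal.const_mul _).congr_deriv ?_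
    rw [Nat.add_sub_cancel, Nat.cast_add_one, show s + ((k : ℂ) + 1) = s + 1 + k by ring]
    linear_combination (x : ℂ) ^ (-(s + 1 + k)) * (h : ℂ) ^ k * negBinom_succ_mul s k
  unfold cpowTaylorRemainder
  simp only [Finset.sum_range_succ' _ n, pow_zero, mul_one]
  exact (hpow.sub (hsum.add_const _)).congr_deriv (by ring)

theorem norm_cpowTaylorRemainder_le (n : ℕ) {s : ℂ} (hs : 0 ≤ s.re + n) {x h : ℝ} (hx : 0 < x)
    (hh : h ∈ Icc (0 : ℝ) 1) :
    ‖cpowTaylorRemainder n s x h‖ ≤ (‖s‖ + n) ^ n * x ^ (-(s.re + n)) := by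
  induction n generalizing s h with
  | zero =>
    rw [Nat.cast_zero, add_zero] at hs
    have hxh : x ≤ x + h := le_add_of_nonneg_right hh.1
    rw [cpowTaylorRemainder, Finset.sum_range_zero, sub_zero,
      norm_cpow_eq_rpow_re_of_pos (hx.trans_le hxh), neg_re]
    simpa using Real.rpow_le_rpow_of_nonpos hx hxh (neg_nonpos.mpr hs)
  | succ n ih =>
    have hs1 : (s + 1).re + n = s.re + (n + 1 : ℕ) := by
      rw [add_re, one_re, Nat.cast_add_one]
      ring
    have hbound : ∀ y ∈ Ico (0 : ℝ) 1, ‖-s * cpowTaylorRemainder n (s + 1) x y‖ ≤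
        (‖s‖ + (n + 1 : ℕ)) ^ (n + 1) * x ^ (-(s.re + (n + 1 : ℕ))) := fun y hy => by
      have hnorm : ‖s + 1‖ + n ≤ ‖s‖ + (n + 1 : ℕ) := by
        have := norm_add_le s 1
        rw [norm_one] at this
        push_cast
        linarith
      rw [norm_mul, norm_neg, pow_succ', mul_assoc]
      refine mul_le_mul (le_add_of_nonneg_right (Nat.cast_nonneg _)) ?_ (norm_nonneg _)
        (by positivity)
      refine (ih (hs1 ▸ hs) (Ico_subset_Icc_self hy)).trans ?_
      rw [hs1]
      gcongr
    have hzero : cpowTaylorRemainder (n + 1) s x 0 = 0 := by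
      simp [cpowTaylorRemainder, Finset.sum_range_succ']
    have hmvt := norm_image_sub_le_of_norm_deriv_le_segment'
      (fun y hy => (hasDerivAt_cpowTaylorRemainder_succ n s
        (add_pos_of_pos_of_nonneg hx hy.1)).hasDerivWithinAt) hbound h hh
    rw [hzero, sub_zero, sub_zero] at hmvt
    exact hmvt.trans (mul_le_of_le_one_right (by positivity) hh.2)

/-- `∑ zᵐ (m + α)^(-s)`. -/
noncomputable def lerchSum (z : ℂ) (α : ℝ) (s : ℂ) : ℂ :=
  ∑' m : ℕ, z ^ m * ((m + α : ℝ) : ℂ) ^ (-s)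

/-- The contribution of the `n`-th Taylor remainders of `(m + α + 1)^(-s)` to
`∑ zᵐ (m + α + 1)^(-s)`. -/
noncomputable def shiftRemainder (z : ℂ) (α : ℝ) (n : ℕ) (s : ℂ) : ℂ :=
  ∑' m : ℕ, z ^ m * cpowTaylorRemainder n s (m + α) 1

theorem summable_natCast_add_rpow_neg {α d : ℝ} (hα : 0 ≤ α) (hd : 1 < d) :
    Summable fun m : ℕ => ((m : ℝ) + α) ^ (-d) := by
  refine ((Real.summable_one_div_nat_add_rpow α d).2 hd).congr fun m => ?_
  have hnonneg : 0 ≤ (m : ℝ) + α := by positivity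
  rw [abs_of_nonneg hnonneg, Real.rpow_neg hnonneg, one_div]

theorem norm_pow_mul_cpow_neg_le {z : ℂ} {α : ℝ} {s : ℂ} (hz : ‖z‖ ≤ 1) (hα : 0 ≤ α)
    (hs : 0 < s.re) (m : ℕ) :
    ‖z ^ m * ((m + α : ℝ) : ℂ) ^ (-s)‖ ≤ ((m : ℝ) + α) ^ (-s.re) := by
  rw [norm_mul, norm_pow, norm_cpow_eq_rpow_re_of_nonneg (by positivity) (by simpa using hs.ne'),
    neg_re]
  exact mul_le_of_le_one_left (by positivity) (pow_le_one₀ (norm_nonneg _) hz)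

theorem summable_pow_mul_cpow_of_one_lt_re {z : ℂ} {α : ℝ} {s : ℂ} (hz : ‖z‖ ≤ 1) (hα : 0 ≤ α)
    (hs : 1 < s.re) : Summable fun m : ℕ => z ^ m * ((m + α : ℝ) : ℂ) ^ (-s) :=
  .of_norm_bounded (summable_natCast_add_rpow_neg hα hs)
    (norm_pow_mul_cpow_neg_le hz hα (by linarith))

theorem norm_lerchSum_le {z : ℂ} {α : ℝ} {s : ℂ} (hz : ‖z‖ ≤ 1) (hα : 0 ≤ α) (hs : 1 < s.re) :
    ‖lerchSum z α s‖ ≤ ∑' m : ℕ, ((m : ℝ) + α) ^ (-s.re) :=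
  tsum_of_norm_bounded (summable_natCast_add_rpow_neg hα hs).hasSum
    (norm_pow_mul_cpow_neg_le hz hα (by linarith))

theorem summable_pow_mul_cpow_of_norm_lt_one {z : ℂ} {α : ℝ} (hz : ‖z‖ < 1) (hα : 0 < α) (s : ℂ) :
    Summable fun m : ℕ => z ^ m * ((m + α : ℝ) : ℂ) ^ (-s) := by
  rcases eq_or_ne z 0 with rfl | hz0
  · exact summable_of_ne_finset_zero (s := {0}) fun m hm => by
      rw [zero_pow (by simpa using hm), zero_mul]
  have hpos : ∀ m : ℕ, 0 < (m : ℝ) + α := fun m => by positivity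
  refine summable_of_ratio_test_tendsto_lt_one hz (.of_forall fun m => ?_) ?_
  · exact mul_ne_zero (pow_ne_zero _ hz0)
      (cpow_ne_zero_iff.2 (.inl (ofReal_ne_zero.2 (hpos m).ne')))
  have hbase : Tendsto (fun m : ℕ => 1 + 1 / ((m : ℝ) + α)) atTop (𝓝 (1 + 0)) :=
    (tendsto_const_nhds.div_atTop
      (tendsto_atTop_add_const_right _ _ tendsto_natCast_atTop_atTop)).const_add 1
  have hlim := ((hbase.rpow_const (.inl (by norm_num))).const_mul ‖z‖ : Tendsto _ _
    (𝓝 (‖z‖ * (1 + 0) ^ (-s.re))))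
  rw [add_zero, Real.one_rpow, mul_one] at hlim
  refine hlim.congr fun m => ?_
  have hm := hpos m
  have hm1 := hpos (m + 1)
  rw [norm_mul, norm_mul, norm_pow, norm_pow, norm_cpow_eq_rpow_re_of_pos hm,
    norm_cpow_eq_rpow_re_of_pos hm1, pow_succ, neg_re,
    show 1 + 1 / ((m : ℝ) + α) = ((m + 1 : ℕ) + α) / (m + α) by push_cast; field_simp; ring,
    Real.div_rpow hm1.le hm.le]
  have := norm_ne_zero_iff.mpr hz0
  field_simp

theorem norm_shiftRemainder_term_le {z : ℂ} {α d : ℝ} (hz : ‖z‖ ≤ 1) (hα : 0 < α) (hd : 0 ≤ d)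
    {n : ℕ} {s : ℂ} (hs : d ≤ s.re + n) (m : ℕ) :
    ‖z ^ m * cpowTaylorRemainder n s (m + α) 1‖ ≤
      (‖s‖ + n) ^ n * α ^ (d - (s.re + n)) * ((m : ℝ) + α) ^ (-d) := by
  have hpos : 0 < (m : ℝ) + α := by positivity
  have hpow : ((m : ℝ) + α) ^ (-(s.re + n)) ≤ α ^ (d - (s.re + n)) * ((m : ℝ) + α) ^ (-d) := by
    rw [show -(s.re + n) = (d - (s.re + n)) + -d by ring, Real.rpow_add hpos]
    gcongr ?_ * _
    exact Real.rpow_le_rpow_of_nonpos hα (by simp) (by linarith)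
  rw [norm_mul, norm_pow, mul_assoc]
  calc _ ≤ 1 * ‖cpowTaylorRemainder n s (m + α) 1‖ := by
        gcongr
        exact pow_le_one₀ (norm_nonneg _) hz
    _ ≤ (‖s‖ + n) ^ n * ((m : ℝ) + α) ^ (-(s.re + n)) := by
        rw [one_mul]
        exact norm_cpowTaylorRemainder_le n (hd.trans hs) hpos ⟨zero_le_one, le_rfl⟩
    _ ≤ _ := by gcongr

theorem differentiable_cpowTaylorRemainder (n : ℕ) {x h : ℝ} (hx : 0 < x) (hxh : 0 < x + h) :
    Differentiable ℂ fun s => cpowTaylorRemainder n s x h := by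
  have hpow : ∀ {y : ℝ} (c : ℂ), 0 < y → Differentiable ℂ fun s : ℂ => (y : ℂ) ^ (-(s + c)) :=
    fun c hy s => DifferentiableAt.const_cpow (by fun_prop) (.inl (by exact_mod_cast hy.ne'))
  unfold cpowTaylorRemainder
  refine .sub (by simpa using hpow 0 hxh) (.fun_sum fun k _ => .mul_const ?_ _)
  exact (differentiable_negBinom k).mul (hpow k hx)

theorem differentiableAt_shiftRemainder {z : ℂ} {α : ℝ} (hz : ‖z‖ ≤ 1) (hα : 0 < α) {n : ℕ} {s : ℂ}
    (hs : 1 < s.re + n) : DifferentiableAt ℂ (shiftRemainder z α n) s := by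
  obtain ⟨d, hd1, hds⟩ := exists_between hs
  set K : ℂ → ℝ := fun w => (‖w‖ + n) ^ n * α ^ (d - (w.re + n))
  have hK : Continuous K := by
    have : Continuous fun w : ℂ => α ^ (d - (w.re + n)) :=
      Real.continuous_const_rpow hα.ne' |>.comp (by fun_prop)
    fun_prop
  set U : Set ℂ := {w | d < w.re + n} ∩ {w | K w < K s + 1}
  have hU : IsOpen U := (isOpen_lt (by fun_prop) (by fun_prop)).inter (isOpen_lt hK (by fun_prop))
  refine (differentiableOn_tsum_of_summable_norm
    (u := fun m : ℕ => (K s + 1) * ((m : ℝ) + α) ^ (-d))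
    ((summable_natCast_add_rpow_neg hα.le hd1).mul_left _) (fun m => ?_) hU
    fun m w hw => ?_).differentiableAt (hU.mem_nhds ⟨hds, lt_add_one (K s)⟩)
  · exact ((differentiable_cpowTaylorRemainder n (by positivity)
      (by positivity)).const_mul _).differentiableOn
  · refine (norm_shiftRemainder_term_le hz hα (zero_le_one.trans hd1.le) hw.1.le m).trans ?_
    gcongr
    exact hw.2.le

theorem summable_shiftRemainder_term {z : ℂ} {α : ℝ} (hz : ‖z‖ ≤ 1) (hα : 0 < α) {n : ℕ} {s : ℂ}
    (hs : 1 < s.re + n) : Summable fun m : ℕ => z ^ m * cpowTaylorRemainder n s (m + α) 1 :=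
  .of_norm_bounded ((summable_natCast_add_rpow_neg hα.le hs).mul_left _)
    (norm_shiftRemainder_term_le hz hα (zero_le_one.trans hs.le) le_rfl)

theorem lerchSum_sub_cpow {z : ℂ} {α : ℝ} (hz : ‖z‖ ≤ 1) (hα : 0 < α) {n : ℕ} {s : ℂ}
    (hs : 1 < s.re + n)
    (hsum : ∀ k : ℕ, Summable fun m : ℕ => z ^ m * ((m + α : ℝ) : ℂ) ^ (-(s + k))) :
    lerchSum z α s - (α : ℂ) ^ (-s) =
      z * (∑ k ∈ Finset.range n, negBinom s k * lerchSum z α (s + k) + shiftRemainder z α n s) := by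
  have hsum0 : Summable fun m : ℕ => z ^ m * ((m + α : ℝ) : ℂ) ^ (-s) := by simpa using hsum 0
  have hterm : ∀ m : ℕ, z ^ (m + 1) * (((m + 1 : ℕ) + α : ℝ) : ℂ) ^ (-s) =
      z * ((∑ k ∈ Finset.range n, negBinom s k * (z ^ m * ((m + α : ℝ) : ℂ) ^ (-(s + k)))) +
        z ^ m * cpowTaylorRemainder n s (m + α) 1) := fun m => by
    rw [cpowTaylorRemainder, mul_sub, Finset.mul_sum]
    simp only [ofReal_one, one_pow, mul_one, mul_left_comm (z ^ m), add_sub_cancel]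
    push_cast
    ring_nf
  have htaylor : ∀ k ∈ Finset.range n, Summable fun m : ℕ =>
      negBinom s k * (z ^ m * ((m + α : ℝ) : ℂ) ^ (-(s + k))) :=
    fun k _ => (hsum k).mul_left _
  rw [lerchSum, hsum0.tsum_eq_zero_add, tsum_congr hterm, tsum_mul_left,
    (summable_sum htaylor).tsum_add (summable_shiftRemainder_term hz hα hs),
    Summable.tsum_finsetSum htaylor]
  simp only [tsum_mul_left, pow_zero, one_mul, Nat.cast_zero, zero_add, add_sub_cancel_left]
  rfl

end ShiftIdentity

section LerchContinuation

open Complex Set Filter Topology Asymptotics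
open scoped FourierTransform

theorem lerchSeries_eq_lerchSum (lam alp : ℝ) (s : ℂ) :
    lerchSeries lam alp s = lerchSum (𝐞 lam) alp s := by
  refine tsum_congr fun m => ?_
  rw [Real.fourierChar_apply, ← exp_nat_mul, cpow_neg, div_eq_mul_inv]
  push_cast
  ring_nf

theorem eqOn_of_eqOn_one_lt_re {f g : ℂ → ℂ} {A : ℝ}
    (hf : ∀ s : ℂ, A < s.re → 0 < s.im → DifferentiableAt ℂ f s)
    (hg : ∀ s : ℂ, A < s.re → 0 < s.im → DifferentiableAt ℂ g s)
    (hfg : ∀ s : ℂ, 1 < s.re → 0 < s.im → f s = g s) {s : ℂ} (hs : A < s.re) (him : 0 < s.im) :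
    f s = g s := by
  set U : Set ℂ := Ioi A ×ℂ Ioi 0
  have hU : IsOpen U := isOpen_Ioi.reProdIm isOpen_Ioi
  have hconn : IsPreconnected U :=
    ((convex_halfSpace_re_gt A).inter (convex_halfSpace_im_gt 0)).isPreconnected
  have hbase : ((max A 1 + 1 : ℝ) : ℂ) + I ∈ U ∩ Ioi 1 ×ℂ Ioi 0 := by
    simp [U, mem_reProdIm, lt_add_of_le_of_pos]
  refine AnalyticOnNhd.eqOn_of_preconnected_of_eventuallyEq
    (DifferentiableOn.analyticOnNhd (fun z hz => (hf z hz.1 hz.2).differentiableWithinAt) hU)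
    (DifferentiableOn.analyticOnNhd (fun z hz => (hg z hz.1 hz.2).differentiableWithinAt) hU)
    hconn hbase.1 ?_ ⟨hs, him⟩
  filter_upwards [(isOpen_Ioi.reProdIm isOpen_Ioi).mem_nhds hbase.2] with z hz
  exact hfg z hz.1 hz.2

theorem ne_one_of_im_pos {s : ℂ} (hs : 0 < s.im) : s ≠ 1 := by
  rintro rfl
  exact hs.ne' one_im

theorem IsLerch.sub_cpow_eq {lam alp : ℝ} {F : ℂ → ℂ} (hF : IsLerch lam alp F) (halp : 0 < alp)
    {n : ℕ} {s : ℂ} (hs : 1 < s.re + n) (him : 0 < s.im) :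
    F s - (alp : ℂ) ^ (-s) = 𝐞 lam *
      (∑ k ∈ Finset.range n, negBinom s k * F (s + k) + shiftRemainder (𝐞 lam) alp n s) := by
  have hq : ‖(𝐞 lam : ℂ)‖ ≤ 1 := (Circle.norm_coe _).le
  have hpow : Differentiable ℂ fun s : ℂ => (alp : ℂ) ^ (-s) := fun s =>
    DifferentiableAt.const_cpow (by fun_prop) (.inl (by exact_mod_cast halp.ne'))
  have hFk : ∀ (k : ℕ) {s : ℂ}, 0 < s.im → DifferentiableAt ℂ (fun s => F (s + k)) s :=
    fun k s him => DifferentiableAt.comp s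
      (hF.1 _ (ne_one_of_im_pos (by simpa using him))) (by fun_prop)
  refine eqOn_of_eqOn_one_lt_re (A := 1 - n) (f := fun s => F s - (alp : ℂ) ^ (-s))
    (g := fun s => 𝐞 lam * (∑ k ∈ Finset.range n, negBinom s k * F (s + k) +
      shiftRemainder (𝐞 lam) alp n s)) (fun s _ him => ?_) (fun s hs him => ?_) (fun s hs _ => ?_)
    (by linarith) him
  · exact (hF.1 s (ne_one_of_im_pos him)).sub (hpow s)
  · refine .const_mul (.add (.fun_sum fun k _ => ?_)
      (differentiableAt_shiftRemainder hq halp (by linarith))) _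
    exact (differentiable_negBinom k s).mul (hFk k him)
  · have hsk : ∀ k : ℕ, 1 < (s + k).re := fun k => by
      rw [add_re, natCast_re]
      linarith [k.cast_nonneg (α := ℝ)]
    have hFs : ∀ k : ℕ, F (s + k) = lerchSum (𝐞 lam) alp (s + k) := fun k => by
      rw [hF.2 _ (hsk k), lerchSeries_eq_lerchSum]
    simp only [hFs, hF.2 s hs, lerchSeries_eq_lerchSum]
    exact lerchSum_sub_cpow hq halp (by linarith [n.cast_nonneg (α := ℝ)]) fun k =>
      summable_pow_mul_cpow_of_one_lt_re hq halp.le (hsk k)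

end LerchContinuation

section PolynomialGrowth

open Complex Set Filter Topology Asymptotics
open scoped FourierTransform

/-- The half-strip `A ≤ re s ≤ B`, `1 ≤ im s`. -/
def upperStrip (A B : ℝ) : Set ℂ := Icc A B ×ℂ Ici 1

/-- `f` is bounded by a constant times a power of `|s|` on the half-strip `upperStrip A B`. -/
def HasPolyGrowth (A B : ℝ) (f : ℂ → ℂ) : Prop :=
  ∃ N : ℕ, f =O[𝓟 (upperStrip A B)] fun s => s ^ N

theorem one_le_norm_of_mem_upperStrip {A B : ℝ} {s : ℂ} (hs : s ∈ upperStrip A B) : 1 ≤ ‖s‖ :=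
  (hs.2 : 1 ≤ s.im).trans ((le_abs_self _).trans (abs_im_le_norm s))

namespace HasPolyGrowth

variable {A B : ℝ} {f g : ℂ → ℂ}

theorem of_isBigO_one (hf : f =O[𝓟 (upperStrip A B)] fun _ => (1 : ℂ)) : HasPolyGrowth A B f :=
  ⟨0, by simpa using hf⟩

theorem add (hf : HasPolyGrowth A B f) (hg : HasPolyGrowth A B g) :
    HasPolyGrowth A B fun s => f s + g s := by
  obtain ⟨N, hN⟩ := hf
  obtain ⟨M, hM⟩ := hg
  have pow_mono : ∀ {n m : ℕ}, n ≤ m →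
      (fun s : ℂ => s ^ n) =O[𝓟 (upperStrip A B)] fun s => s ^ m := fun h =>
    isBigO_principal.2 ⟨1, fun s hs => by
      rw [one_mul, norm_pow, norm_pow]
      exact pow_le_pow_right₀ (one_le_norm_of_mem_upperStrip hs) h⟩
  exact ⟨max N M, (hN.trans (pow_mono (le_max_left N M))).add
    (hM.trans (pow_mono (le_max_right N M)))⟩

theorem mul (hf : HasPolyGrowth A B f) (hg : HasPolyGrowth A B g) :
    HasPolyGrowth A B fun s => f s * g s := by
  obtain ⟨N, hN⟩ := hf
  obtain ⟨M, hM⟩ := hg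
  exact ⟨N + M, by simpa only [pow_add] using hN.mul hM⟩

theorem const (c : ℂ) : HasPolyGrowth A B fun _ => c :=
  of_isBigO_one (isBigO_const_const c one_ne_zero _)

theorem sum {ι : Type*} {S : Finset ι} {f : ι → ℂ → ℂ} (hf : ∀ i ∈ S, HasPolyGrowth A B (f i)) :
    HasPolyGrowth A B fun s => ∑ i ∈ S, f i s := by
  induction S using Finset.cons_induction with
  | empty => simpa using const 0
  | cons i S hi ih =>
    simp only [Finset.sum_cons]
    exact (hf i (Finset.mem_cons_self i S)).add
      (ih fun j hj => hf j (Finset.mem_cons_of_mem hj))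

theorem polynomial_eval (p : Polynomial ℂ) : HasPolyGrowth A B fun s => p.eval s := by
  induction p using Polynomial.induction_on' with
  | add p q hp hq => simpa only [Polynomial.eval_add] using hp.add hq
  | monomial n c =>
    simp only [Polynomial.eval_monomial]
    exact (const c).mul ⟨n, isBigO_refl _ _⟩

theorem negBinom (k : ℕ) : HasPolyGrowth A B fun s => negBinom s k := by
  unfold _root_.negBinom
  simpa only [div_eq_mul_inv] using ((const _).mul (polynomial_eval _)).mul (const _)

theorem of_norm_le {g : ℂ → ℂ} (hg : HasPolyGrowth A B g)
    (h : ∀ s ∈ upperStrip A B, ‖f s‖ ≤ ‖g s‖) : HasPolyGrowth A B f := by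
  obtain ⟨N, hN⟩ := hg
  exact ⟨N, (isBigO_principal.2 ⟨1, by simpa using h⟩).trans hN⟩

theorem of_norm_eq_re {g : ℝ → ℝ} (hg : ContinuousOn g (Icc A B))
    (h : ∀ s ∈ upperStrip A B, ‖f s‖ ≤ g s.re) : HasPolyGrowth A B f := by
  obtain ⟨C, hC⟩ := isCompact_Icc.exists_bound_of_continuousOn hg
  refine of_isBigO_one (isBigO_principal.2 ⟨C, fun s hs => ?_⟩)
  rw [norm_one, mul_one]
  exact (h s hs).trans ((le_abs_self _).trans (hC _ hs.1))

theorem comp_add (x : ℝ) (hf : HasPolyGrowth (A + x) (B + x) f) :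
    HasPolyGrowth A B fun s => f (s + x) := by
  obtain ⟨N, hN⟩ := hf
  obtain ⟨C, hC⟩ := isBigO_principal.1 hN
  refine ⟨N, isBigO_principal.2 ⟨|C| * (1 + |x|) ^ N, fun s hs => ?_⟩⟩
  have hmem : s + x ∈ upperStrip (A + x) (B + x) := by
    simpa [upperStrip, mem_reProdIm] using hs
  have hnorm : ‖s + x‖ ≤ (1 + |x|) * ‖s‖ := by
    have h1 := one_le_norm_of_mem_upperStrip hs
    have h2 := norm_add_le s x
    rw [norm_real, Real.norm_eq_abs] at h2
    nlinarith [abs_nonneg x]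
  calc _ ≤ |C| * ‖(s + x) ^ N‖ := (hC _ hmem).trans (by gcongr; exact le_abs_self C)
    _ ≤ |C| * ((1 + |x|) * ‖s‖) ^ N := by rw [norm_pow]; gcongr
    _ = |C| * (1 + |x|) ^ N * ‖s ^ N‖ := by rw [mul_pow, norm_pow, mul_assoc]

theorem comp_add_natCast (k : ℕ) (hf : HasPolyGrowth (A + k) (B + k) f) :
    HasPolyGrowth A B fun s => f (s + k) := by
  simpa only [ofReal_natCast] using comp_add (k : ℝ) hf

theorem comp_sub_one (hf : HasPolyGrowth (A - 1) (B - 1) f) :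
    HasPolyGrowth A B fun s => f (s - 1) := by
  simpa only [ofReal_neg, ofReal_one, ← sub_eq_add_neg] using comp_add (-1) hf

theorem const_cpow_neg {x : ℝ} (hx : 0 < x) : HasPolyGrowth A B fun s => (x : ℂ) ^ (-s) := by
  refine of_norm_eq_re (g := fun σ => x ^ (-σ))
    ((Real.continuous_const_rpow hx.ne').comp continuous_neg).continuousOn fun s _ => ?_
  rw [norm_cpow_eq_rpow_re_of_pos hx, neg_re]

theorem shiftRemainder {z : ℂ} {α : ℝ} (hz : ‖z‖ ≤ 1) (hα : 0 < α) {n : ℕ} (hA : 2 ≤ A + n) :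
    HasPolyGrowth A B (shiftRemainder z α n) := by
  set M := ∑' m : ℕ, ((m : ℝ) + α) ^ (-2 : ℝ)
  have hbound : ∀ s ∈ upperStrip A B, ‖_root_.shiftRemainder z α n s‖ ≤
      (‖s‖ + n) ^ n * α ^ (2 - (s.re + n)) * M := fun s hs =>
    tsum_of_norm_bounded ((summable_natCast_add_rpow_neg hα.le one_lt_two).hasSum.mul_left _)
      (norm_shiftRemainder_term_le hz hα zero_le_two (by linarith [hs.1.1]))
  have hpow : HasPolyGrowth A B fun s => ((1 + n) * s) ^ n := by
    simpa only [mul_pow] using (const ((1 + n : ℂ) ^ n)).mul ⟨n, isBigO_refl _ _⟩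
  have hexp : HasPolyGrowth A B fun s : ℂ => ((α ^ (2 - (s.re + n)) * M : ℝ) : ℂ) := by
    refine of_norm_eq_re (g := fun σ => |α ^ (2 - (σ + n)) * M|) ?_ fun s _ => by
      rw [norm_real, Real.norm_eq_abs]
    exact (((Real.continuous_const_rpow hα.ne').comp (by fun_prop)).mul
      continuous_const).abs.continuousOn
  refine (hpow.mul hexp).of_norm_le fun s hs => (hbound s hs).trans ?_
  have hs1 := one_le_norm_of_mem_upperStrip hs
  have hn1 : ‖(1 + n : ℂ)‖ = 1 + n := by exact_mod_cast norm_natCast (1 + n)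
  rw [norm_mul, norm_real, Real.norm_eq_abs, mul_assoc, norm_pow, norm_mul, hn1]
  refine mul_le_mul (pow_le_pow_left₀ (by positivity) ?_ n) (le_abs_self _)
    (mul_nonneg (by positivity) (tsum_nonneg fun m => by positivity)) (by positivity)
  nlinarith [n.cast_nonneg (α := ℝ)]

end HasPolyGrowth

variable {lam alp : ℝ} {F : ℂ → ℂ}

theorem IsLerch.one_sub_mul_eq (hF : IsLerch lam alp F) (halp : 0 < alp) {n : ℕ} {s : ℂ}
    (hs : 0 < s.re + n) (him : 0 < s.im) :
    (1 - 𝐞 lam) * F s = (alp : ℂ) ^ (-s) + 𝐞 lam *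
      (∑ k ∈ Finset.range n, negBinom s (k + 1) * F (s + (k + 1 : ℕ)) +
        shiftRemainder (𝐞 lam) alp (n + 1) s) := by
  have h := hF.sub_cpow_eq halp (n := n + 1) (s := s) (by push_cast; linarith) him
  rw [Finset.sum_range_succ', negBinom_zero, one_mul, Nat.cast_zero, add_zero] at h
  linear_combination h

theorem IsLerch.sub_one_mul_eq (hF : IsLerch lam alp F) (halp : 0 < alp) (hlam : 𝐞 lam = 1)
    {n : ℕ} {s : ℂ} (hs : 0 < s.re + n) (him : 0 < s.im) :
    (s - 1) * F s = (alp : ℂ) ^ (-(s - 1)) +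
      (∑ k ∈ Finset.range n, negBinom (s - 1) (k + 2) * F (s + (k + 1 : ℕ)) +
        shiftRemainder 1 alp (n + 2) (s - 1)) := by
  have h := hF.sub_cpow_eq halp (n := n + 2) (s := s - 1)
    (by rw [sub_re, one_re]; push_cast; linarith) (by simpa using him)
  have hshift : ∀ k : ℕ, s - 1 + (k + 1 + 1 : ℕ) = s + (k + 1 : ℕ) := fun k => by push_cast; ring
  simp only [Finset.sum_range_succ', hshift, hlam, Circle.coe_one, negBinom_zero, negBinom_one,
    zero_add, Nat.cast_one, Nat.cast_zero, add_zero, sub_add_cancel, one_mul] at h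
  linear_combination h

theorem IsLerch.hasPolyGrowth (hF : IsLerch lam alp F) (halp : 0 < alp) (A B : ℝ) :
    HasPolyGrowth A B F := by
  have hq : ‖(𝐞 lam : ℂ)‖ ≤ 1 := (Circle.norm_coe _).le
  suffices h : ∀ (j : ℕ) (A B : ℝ), 2 ≤ A + j → HasPolyGrowth A B F by
    obtain ⟨j, hj⟩ := exists_nat_ge (2 - A)
    exact h j A B (by linarith)
  intro j
  induction j with
  | zero =>
    intro A B hA
    have hA' : 2 ≤ A := by simpa using hA
    refine ((HasPolyGrowth.const_cpow_neg halp).add ((HasPolyGrowth.const (𝐞 lam)).mul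
      (.shiftRemainder hq halp (n := 0) hA))).of_norm_le fun s hs => le_of_eq ?_
    have h := hF.sub_cpow_eq halp (n := 0) (s := s)
      (by simpa using one_lt_two.trans_le (hA'.trans hs.1.1)) (one_pos.trans_le hs.2)
    rw [Finset.sum_range_zero, zero_add] at h
    rw [← h, add_sub_cancel]
  | succ j ih =>
    intro A B hA
    push_cast at hA
    have him : ∀ s ∈ upperStrip A B, 0 < s.im := fun s hs => one_pos.trans_le hs.2
    have hre : ∀ s ∈ upperStrip A B, 0 < s.re + j := fun s hs => by linarith [hs.1.1]
    have hshift : ∀ k : ℕ, HasPolyGrowth A B fun s => F (s + (k + 1 : ℕ)) := fun k =>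
      .comp_add_natCast (k + 1) (ih _ _ (by push_cast; linarith [k.cast_nonneg (α := ℝ)]))
    by_cases hlam : 𝐞 lam = 1
    · have hgrowth := (HasPolyGrowth.const_cpow_neg halp).comp_sub_one (A := A) (B := B) |>.add
        ((HasPolyGrowth.sum (S := Finset.range j) fun k _ =>
          (HasPolyGrowth.negBinom (k + 2)).comp_sub_one.mul (hshift k)).add
          (HasPolyGrowth.shiftRemainder (z := 1) (by simp) halp (n := j + 2)
            (by push_cast; linarith)).comp_sub_one)
      refine hgrowth.of_norm_le fun s hs => ?_
      rw [← hF.sub_one_mul_eq halp hlam (hre s hs) (him s hs), norm_mul]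
      refine le_mul_of_one_le_left (norm_nonneg _) ((hs.2 : 1 ≤ s.im).trans ?_)
      simpa using (le_abs_self _).trans (abs_im_le_norm (s - 1))
    · have hgrowth := (HasPolyGrowth.const_cpow_neg halp).add ((HasPolyGrowth.const (𝐞 lam)).mul
        ((HasPolyGrowth.sum (S := Finset.range j) fun k _ =>
          (HasPolyGrowth.negBinom (k + 1)).mul (hshift k)).add
          (HasPolyGrowth.shiftRemainder hq halp (n := j + 1) (by push_cast; linarith))))
      have hne : (1 - 𝐞 lam : ℂ) ≠ 0 := sub_ne_zero.2 fun h => hlam (Circle.coe_eq_one.1 h.symm)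
      refine ((HasPolyGrowth.const (1 - 𝐞 lam : ℂ)⁻¹).mul hgrowth).of_norm_le fun s hs => ?_
      rw [← hF.one_sub_mul_eq halp (hre s hs) (him s hs), inv_mul_cancel_left₀ hne]

end PolynomialGrowth

section FirstTerm

open Complex Set Filter Topology
open scoped FourierTransform

theorem div_rpow_one_add_lt_sub {α x : ℝ} (hα : 0 < α) (hx : 0 < x) :
    (α / (x + 1)) ^ (1 + α) < (α / x) ^ α - (α / (x + 1)) ^ α := by
  have hlog : 1 / (x + 1) < Real.log ((x + 1) / x) := by
    have h := Real.log_lt_sub_one_of_pos (x := x / (x + 1)) (by positivity)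
      ((div_lt_one (by linarith)).2 (lt_add_one x)).ne
    have hsub : x / (x + 1) - 1 = -(1 / (x + 1)) := by field_simp; ring
    rw [← inv_div x, Real.log_inv]
    linarith
  have hpow : 1 + α / (x + 1) < ((x + 1) / x) ^ α := by
    rw [Real.rpow_def_of_pos (by positivity)]
    have h := Real.add_one_le_exp (Real.log ((x + 1) / x) * α)
    have hdiv : α / (x + 1) = 1 / (x + 1) * α := by ring
    nlinarith
  have hfactor : (α / x) ^ α = (α / (x + 1)) ^ α * ((x + 1) / x) ^ α := by
    rw [← Real.mul_rpow (by positivity) (by positivity)]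
    congr 1
    field_simp
  rw [hfactor, Real.rpow_one_add' (by positivity) (by linarith)]
  have hpos : 0 < (α / (x + 1)) ^ α := by positivity
  nlinarith

theorem summable_and_tsum_div_rpow_lt_one {α : ℝ} (hα : 0 < α) :
    Summable (fun m : ℕ => (α / ((m + 1 : ℕ) + α)) ^ (1 + α)) ∧
      ∑' m : ℕ, (α / ((m + 1 : ℕ) + α)) ^ (1 + α) < 1 := by
  set d : ℕ → ℝ := fun m => (α / (m + α)) ^ α
  have hlt : ∀ m : ℕ, (α / ((m + 1 : ℕ) + α)) ^ (1 + α) < d m - d (m + 1) := fun m => by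
    simpa only [d, Nat.cast_add_one, add_right_comm] using
      div_rpow_one_add_lt_sub hα (x := m + α) (by positivity)
  have hnonneg : ∀ m : ℕ, 0 ≤ (α / ((m + 1 : ℕ) + α)) ^ (1 + α) := fun m => by positivity
  have hd0 : d 0 = 1 := by simp [d, div_self hα.ne']
  have hlim : Tendsto d atTop (𝓝 0) := by
    have h : Tendsto (fun m : ℕ => α / ((m : ℝ) + α)) atTop (𝓝 0) := tendsto_const_nhds.div_atTop
      (tendsto_atTop_add_const_right _ _ tendsto_natCast_atTop_atTop)
    simpa only [Real.zero_rpow hα.ne'] using h.rpow_const (.inr hα.le)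
  have htel : HasSum (fun m => d m - d (m + 1)) 1 := by
    rw [hasSum_iff_tendsto_nat_of_nonneg fun m => (hnonneg m).trans (hlt m).le]
    simpa only [Finset.sum_range_sub', hd0, sub_zero] using hlim.const_sub (d 0)
  have hsum := Summable.of_nonneg_of_le hnonneg (fun m => (hlt m).le) htel.summable
  exact ⟨hsum,
    (hsum.tsum_lt_tsum (fun m => (hlt m).le) (hlt 0) htel.summable).trans_eq htel.tsum_eq⟩

-- The exponent `1 + α` is where the first term starts to dominate: `(α / (m + α)) ^ (1 + α)` is
-- smaller than the telescoping difference of `(α / (m + α)) ^ α`.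
theorem exists_norm_cpow_mul_lerchSum_sub_one_le {α : ℝ} (hα : 0 < α) :
    ∃ r < 1, ∀ z s : ℂ, ‖z‖ ≤ 1 → 1 + α ≤ s.re → ‖(α : ℂ) ^ s * lerchSum z α s - 1‖ ≤ r := by
  obtain ⟨hsum, hlt⟩ := summable_and_tsum_div_rpow_lt_one hα
  refine ⟨_, hlt, fun z s hz hs => ?_⟩
  have hα0 : (α : ℂ) ≠ 0 := by exact_mod_cast hα.ne'
  rw [lerchSum, (summable_pow_mul_cpow_of_one_lt_re hz hα.le (by linarith)).tsum_eq_zero_add,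
    mul_add, pow_zero, one_mul, Nat.cast_zero, zero_add, ← cpow_add _ _ hα0, add_neg_cancel,
    cpow_zero, add_sub_cancel_left, ← tsum_mul_left]
  refine tsum_of_norm_bounded hsum.hasSum fun m => ?_
  have hpos : 0 < ((m + 1 : ℕ) : ℝ) + α := by positivity
  calc ‖(α : ℂ) ^ s * (z ^ (m + 1) * (((m + 1 : ℕ) + α : ℝ) : ℂ) ^ (-s))‖
      = ‖z‖ ^ (m + 1) * (α / ((m + 1 : ℕ) + α)) ^ s.re := by
        rw [norm_mul, norm_mul, norm_pow, norm_cpow_eq_rpow_re_of_pos hα,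
          norm_cpow_eq_rpow_re_of_pos hpos, neg_re, Real.rpow_neg hpos.le,
          Real.div_rpow hα.le hpos.le]
        ring
    _ ≤ 1 * (α / ((m + 1 : ℕ) + α)) ^ (1 + α) := by
        refine mul_le_mul (pow_le_one₀ (norm_nonneg _) hz)
          (Real.rpow_le_rpow_of_exponent_ge (by positivity) ?_ hs) (by positivity) zero_le_one
        rw [div_le_one hpos]
        push_cast
        linarith [m.cast_nonneg (α := ℝ)]
    _ = _ := one_mul _

variable {lam alp : ℝ} {F : ℂ → ℂ}

theorem IsLerch.eq_lerchSum (hF : IsLerch lam alp F) {s : ℂ} (hs : 1 < s.re) :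
    F s = lerchSum (𝐞 lam) alp s := by
  rw [hF.2 s hs, lerchSeries_eq_lerchSum]

theorem IsLerch.exists_norm_cpow_mul_sub_one_le (hF : IsLerch lam alp F) (halp : 0 < alp) :
    ∃ r < 1, ∀ s : ℂ, 1 + alp ≤ s.re → ‖(alp : ℂ) ^ s * F s - 1‖ ≤ r := by
  obtain ⟨r, hr1, hr⟩ := exists_norm_cpow_mul_lerchSum_sub_one_le halp
  refine ⟨r, hr1, fun s hs => ?_⟩
  rw [hF.eq_lerchSum (by linarith)]
  exact hr _ _ (Circle.norm_coe _).le hs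

theorem IsLerch.ne_zero_of_one_add_le_re (hF : IsLerch lam alp F) (halp : 0 < alp) {s : ℂ}
    (hs : 1 + alp ≤ s.re) : F s ≠ 0 := by
  obtain ⟨r, hr1, hr⟩ := hF.exists_norm_cpow_mul_sub_one_le halp
  intro h
  have := hr s hs
  rw [h, mul_zero, zero_sub, norm_neg, norm_one] at this
  linarith

end FirstTerm

section Zeros

open Complex Set Filter Topology
open scoped FourierTransform

variable {lam alp : ℝ} {F : ℂ → ℂ}

theorem IsLerch.analyticAt (hF : IsLerch lam alp F) {s : ℂ} (hs : s ≠ 1) : AnalyticAt ℂ F s :=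
  DifferentiableOn.analyticAt (s := {1}ᶜ) (fun z hz => (hF.1 z hz).differentiableWithinAt)
    (isOpen_compl_singleton.mem_nhds hs)

theorem IsLerch.analyticOrderAt_ne_top (hF : IsLerch lam alp F) (halp : 0 < alp) {s : ℂ}
    (hs : s ≠ 1) : analyticOrderAt F s ≠ ⊤ := by
  have hbase : ((1 + alp : ℝ) : ℂ) ≠ 1 := by exact_mod_cast (lt_add_of_pos_right 1 halp).ne'
  refine AnalyticOnNhd.analyticOrderAt_ne_top_of_isPreconnected (U := {1}ᶜ)
    (fun z hz => hF.analyticAt hz)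
    (isConnected_compl_singleton_of_one_lt_rank (by simp) 1).isPreconnected hbase hs ?_
  rw [(hF.analyticAt hbase).analyticOrderAt_eq_zero.2
    (hF.ne_zero_of_one_add_le_re halp (by rw [ofReal_re]))]
  exact ENat.zero_ne_top

theorem IsLerch.exists_differentiableAt_eq_sub_one_mul (hF : IsLerch lam alp F) (halp : 0 < alp) :
    ∃ G : ℂ → ℂ, (∀ s : ℂ, 0 < s.re → DifferentiableAt ℂ G s) ∧
      ∀ s : ℂ, 0 < s.re → 0 < s.im → G s = (s - 1) * F s := by
  have hpow : Differentiable ℂ fun s : ℂ => (alp : ℂ) ^ (-s) := fun s =>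
    DifferentiableAt.const_cpow (by fun_prop) (.inl (by exact_mod_cast halp.ne'))
  have hrem : ∀ {z s : ℂ} (n : ℕ), ‖z‖ ≤ 1 → 1 < s.re + n →
      DifferentiableAt ℂ (shiftRemainder z alp n) s := fun n hz hs =>
    differentiableAt_shiftRemainder hz halp hs
  by_cases hlam : 𝐞 lam = 1
  · refine ⟨fun s => (alp : ℂ) ^ (-(s - 1)) + shiftRemainder 1 alp 2 (s - 1), fun s hs => ?_,
      fun s hs him => ?_⟩
    · exact ((hpow _).comp s (by fun_prop)).add
        ((hrem 2 (by simp) (by simp; linarith)).comp s (by fun_prop))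
    · simpa using (hF.sub_one_mul_eq halp hlam (n := 0) (by simpa using hs) him).symm
  · have hne : (1 - 𝐞 lam : ℂ) ≠ 0 := sub_ne_zero.2 fun h => hlam (Circle.coe_eq_one.1 h.symm)
    refine ⟨fun s => (s - 1) * ((1 - 𝐞 lam : ℂ)⁻¹ *
      ((alp : ℂ) ^ (-s) + 𝐞 lam * shiftRemainder (𝐞 lam) alp 1 s)), fun s hs => ?_,
      fun s hs him => ?_⟩
    · exact .mul (by fun_prop) (((hpow s).add
        ((hrem 1 (Circle.norm_coe _).le (by simpa using hs)).const_mul _)).const_mul _)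
    · have h := hF.one_sub_mul_eq halp (n := 0) (s := s) (by simpa using hs) him
      rw [Finset.sum_range_zero, zero_add, zero_add] at h
      beta_reduce
      rw [← h, inv_mul_cancel_left₀ hne]

theorem IsLerch.finite_zeros_near_one (hF : IsLerch lam alp F) (halp : 0 < alp) :
    {s : ℂ | s ∈ Metric.closedBall 1 (1 / 2) ∧ 0 < s.im ∧ F s = 0}.Finite := by
  obtain ⟨G, hG, hGF⟩ := hF.exists_differentiableAt_eq_sub_one_mul halp
  have hopen : IsOpen {s : ℂ | 0 < s.re} := isOpen_lt continuous_const continuous_re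
  have hGan : AnalyticOnNhd ℂ G {s : ℂ | 0 < s.re} :=
    DifferentiableOn.analyticOnNhd (fun s hs => (hG s hs).differentiableWithinAt) hopen
  have hre : ∀ s ∈ Metric.closedBall (1 : ℂ) (1 / 2), 0 < s.re := fun s hs => by
    have h := (abs_re_le_norm (s - 1)).trans (mem_closedBall_iff_norm.1 hs)
    rw [sub_re, one_re, abs_le] at h
    linarith [h.1]
  set p : ℂ := (1 + alp : ℝ) + I
  have hp : p.re = 1 + alp ∧ p.im = 1 := by simp [p]
  have hp0 : 0 < p.re := by rw [hp.1]; linarith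
  have hpim : 0 < p.im := by rw [hp.2]; exact one_pos
  have hGp : analyticOrderAt G p ≠ ⊤ := by
    rw [(hGan p hp0).analyticOrderAt_eq_zero.2]
    · exact ENat.zero_ne_top
    · rw [hGF p hp0 hpim]
      exact mul_ne_zero (sub_ne_zero.2 (ne_one_of_im_pos hpim))
        (hF.ne_zero_of_one_add_le_re halp hp.1.ge)
  refine (finite_zeros_of_isCompact (isCompact_closedBall (1 : ℂ) (1 / 2))
    (hGan.mono hre) fun s hs => hGan.analyticOrderAt_ne_top_of_isPreconnected
      (convex_halfSpace_re_gt 0).isPreconnected hp0 (hre s hs) hGp).subset ?_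
  rintro s ⟨hs, him, hFs⟩
  exact ⟨hs, by rw [hGF s (hre s hs) him, hFs, mul_zero]⟩

theorem IsLerch.finite_zeros_of_isCompact (hF : IsLerch lam alp F) (halp : 0 < alp) {K : Set ℂ}
    (hK : IsCompact K) : {s : ℂ | s ∈ K ∧ 0 < s.im ∧ F s = 0}.Finite := by
  have hne : ∀ s ∈ K \ Metric.ball 1 (1 / 2), s ≠ 1 := by
    rintro s hs rfl
    exact hs.2 (Metric.mem_ball_self (by norm_num))
  refine ((hF.finite_zeros_near_one halp).union (_root_.finite_zeros_of_isCompact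
    (hK.diff Metric.isOpen_ball) (fun s hs => hF.analyticAt (hne s hs))
    fun s hs => hF.analyticOrderAt_ne_top halp (hne s hs))).subset ?_
  rintro s ⟨hs, him, hFs⟩
  by_cases hball : s ∈ Metric.ball (1 : ℂ) (1 / 2)
  · exact .inl ⟨Metric.ball_subset_closedBall hball, him, hFs⟩
  · exact .inr ⟨⟨hs, hball⟩, hFs⟩

end Zeros

section AbelSummation

open Complex Set Filter Topology
open scoped FourierTransform

theorem tendsto_shiftRemainder_of_norm_le_one {ι : Type*} {l : Filter ι} {u : ι → ℂ} {q : ℂ}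
    (hu : Tendsto u l (𝓝 q)) (hnorm : ∀ᶠ i in l, ‖u i‖ ≤ 1) {α : ℝ} (hα : 0 < α) {n : ℕ} {s : ℂ}
    (hs : 1 < s.re + n) :
    Tendsto (fun i => shiftRemainder (u i) α n s) l (𝓝 (shiftRemainder q α n s)) := by
  refine tendsto_tsum_of_dominated_convergence
    ((summable_natCast_add_rpow_neg hα.le hs).mul_left
      ((‖s‖ + n) ^ n * α ^ (s.re + n - (s.re + n))))
    (fun m => (hu.pow m).mul_const _) ?_
  filter_upwards [hnorm] with i hi m
  exact norm_shiftRemainder_term_le hi hα (zero_le_one.trans hs.le) le_rfl m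

theorem lerchSum_eq_of_norm_lt_one {z : ℂ} (hz : ‖z‖ < 1) {α : ℝ} (hα : 0 < α) {n : ℕ} {s : ℂ}
    (hs : 0 < s.re + n) : (1 - z) * lerchSum z α s = (α : ℂ) ^ (-s) + z *
      (∑ k ∈ Finset.range n, negBinom s (k + 1) * lerchSum z α (s + (k + 1 : ℕ)) +
        shiftRemainder z α (n + 1) s) := by
  have h := lerchSum_sub_cpow hz.le hα (n := n + 1) (s := s) (by push_cast; linarith)
    fun k => summable_pow_mul_cpow_of_norm_lt_one hz hα _
  rw [Finset.sum_range_succ', negBinom_zero, one_mul, Nat.cast_zero, add_zero] at h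
  linear_combination h

theorem IsLerch.tendsto_lerchSum {lam alp : ℝ} {F : ℂ → ℂ} (hF : IsLerch lam alp F)
    (halp : 0 < alp) (hlam : 𝐞 lam ≠ 1) {ι : Type*} {l : Filter ι} {u : ι → ℂ}
    (hu : Tendsto u l (𝓝 (𝐞 lam))) (hnorm : ∀ᶠ i in l, ‖u i‖ < 1) {s : ℂ} (him : 0 < s.im) :
    Tendsto (fun i => lerchSum (u i) alp s) l (𝓝 (F s)) := by
  have hle : ∀ᶠ i in l, ‖u i‖ ≤ 1 := hnorm.mono fun _ h => h.le
  suffices h : ∀ (j : ℕ) (s : ℂ), 1 < s.re + j → 0 < s.im →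
      Tendsto (fun i => lerchSum (u i) alp s) l (𝓝 (F s)) by
    obtain ⟨j, hj⟩ := exists_nat_gt (1 - s.re)
    exact h j s (by linarith) him
  intro j
  induction j with
  | zero =>
    intro s hs him
    have hFs := hF.sub_cpow_eq halp hs him
    rw [Finset.sum_range_zero, zero_add, sub_eq_iff_eq_add] at hFs
    rw [hFs]
    refine ((hu.mul (tendsto_shiftRemainder_of_norm_le_one hu hle halp hs)).add_const _).congr' ?_
    filter_upwards [hnorm] with i hi
    have h := lerchSum_sub_cpow hi.le halp hs fun k =>
      summable_pow_mul_cpow_of_norm_lt_one hi halp _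
    rw [Finset.sum_range_zero, zero_add] at h
    rw [← h, sub_add_cancel]
  | succ j ih =>
    intro s hs him
    push_cast at hs
    have hne : (1 - 𝐞 lam : ℂ) ≠ 0 := sub_ne_zero.2 fun h => hlam (Circle.coe_eq_one.1 h.symm)
    have hterm : ∀ k ∈ Finset.range j, Tendsto (fun i => negBinom s (k + 1) *
        lerchSum (u i) alp (s + (k + 1 : ℕ))) l (𝓝 (negBinom s (k + 1) * F (s + (k + 1 : ℕ)))) :=
      fun k _ => (ih _ (by rw [add_re, natCast_re]; push_cast; linarith [k.cast_nonneg (α := ℝ)])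
        (by simpa using him)).const_mul _
    have hlim := (hu.mul ((tendsto_finsetSum _ hterm).add (tendsto_shiftRemainder_of_norm_le_one
      (n := j + 1) (s := s) hu hle halp (by push_cast; linarith)))).const_add ((alp : ℂ) ^ (-s))
    rw [← hF.one_sub_mul_eq halp (by linarith) him] at hlim
    have hquot := hlim.div (hu.const_sub 1) hne
    rw [mul_div_cancel_left₀ _ hne] at hquot
    refine hquot.congr' ?_
    filter_upwards [hnorm] with i hi
    have hi1 : (1 - u i : ℂ) ≠ 0 := sub_ne_zero.2 fun h => by simp [← h] at hi
    rw [Pi.div_apply, ← lerchSum_eq_of_norm_lt_one hi halp (by linarith),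
      mul_div_cancel_left₀ _ hi1]

end AbelSummation

section LipschitzFormula

open Complex Set Filter Topology Asymptotics MeasureTheory
open scoped FourierTransform

theorem norm_cpow_mul_exp_neg_mul {t : ℝ} (ht : 0 < t) (b r : ℂ) :
    ‖(t : ℂ) ^ b * exp (-(r * t))‖ = t ^ b.re * Real.exp (-(r.re * t)) := by
  rw [norm_mul, norm_cpow_eq_rpow_re_of_pos ht, norm_exp, neg_re, re_mul_ofReal]

theorem integrableOn_rpow_mul_exp_neg_mul {b c : ℝ} (hb : -1 < b) (hc : 0 < c) :
    IntegrableOn (fun t : ℝ => t ^ b * Real.exp (-(c * t))) (Ioi 0) := by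
  simpa using integrableOn_rpow_mul_exp_neg_mul_rpow hb one_pos hc

theorem aestronglyMeasurable_cpow_mul_exp_neg_mul (b r : ℂ) :
    AEStronglyMeasurable (fun t : ℝ => (t : ℂ) ^ b * exp (-(r * t))) (volume.restrict (Ioi 0)) :=
  ContinuousOn.aestronglyMeasurable (fun t ht =>
    ((continuousAt_ofReal_cpow_const t b (.inr (ne_of_gt ht))).mul
      (by fun_prop)).continuousWithinAt) measurableSet_Ioi

theorem differentiableOn_integral_cpow_mul_exp_neg_mul {a : ℂ} (ha : 0 < a.re) :
    DifferentiableOn ℂ (fun r : ℂ => ∫ t : ℝ in Ioi 0, (t : ℂ) ^ (a - 1) * exp (-(r * t)))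
      {r | 0 < r.re} := by
  intro r (hr : 0 < r.re)
  have hderiv : ∀ t : ℝ, 0 < t → ∀ z : ℂ, HasDerivAt (fun z : ℂ => (t : ℂ) ^ (a - 1) *
      exp (-(z * t))) (-((t : ℂ) ^ a * exp (-(z * t)))) z := fun t ht z => by
    have ht0 : (t : ℂ) ≠ 0 := by exact_mod_cast ht.ne'
    have h := (((hasDerivAt_id z).mul_const (t : ℂ)).neg.cexp).const_mul ((t : ℂ) ^ (a - 1))
    refine h.congr_deriv ?_
    rw [cpow_sub _ _ ht0, cpow_one]
    field_simp
    simp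
  have hint := integrableOn_rpow_mul_exp_neg_mul (b := a.re - 1) (by linarith) hr
  refine (hasDerivAt_integral_of_dominated_loc_of_deriv_le (s := {z : ℂ | r.re / 2 < z.re})
    (F' := fun z (t : ℝ) => -((t : ℂ) ^ a * exp (-(z * t))))
    (bound := fun t : ℝ => t ^ a.re * Real.exp (-(r.re / 2 * t)))
    ((isOpen_lt continuous_const continuous_re).mem_nhds (half_lt_self hr))
    (.of_forall fun z => aestronglyMeasurable_cpow_mul_exp_neg_mul _ z)
    (hint.mono' (aestronglyMeasurable_cpow_mul_exp_neg_mul _ r) ?_)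
    (aestronglyMeasurable_cpow_mul_exp_neg_mul _ r).neg ?_
    (integrableOn_rpow_mul_exp_neg_mul (by linarith) (half_pos hr))
    ?_).2.differentiableAt.differentiableWithinAt
  · filter_upwards [ae_restrict_mem measurableSet_Ioi] with t ht
    rw [norm_cpow_mul_exp_neg_mul ht, sub_re, one_re]
  · filter_upwards [ae_restrict_mem measurableSet_Ioi] with t (ht : 0 < t) z (hz : _ < _)
    rw [norm_neg, norm_cpow_mul_exp_neg_mul ht]
    gcongr
  · filter_upwards [ae_restrict_mem measurableSet_Ioi] with t ht z _ using hderiv t ht z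

theorem integral_cpow_mul_exp_neg_mul_of_re_pos {a r : ℂ} (ha : 0 < a.re) (hr : 0 < r.re) :
    ∫ t : ℝ in Ioi 0, (t : ℂ) ^ (a - 1) * exp (-(r * t)) = (1 / r) ^ a * Gamma a := by
  have hopen : IsOpen {z : ℂ | 0 < z.re} := isOpen_lt continuous_const continuous_re
  have hpow : DifferentiableOn ℂ (fun r : ℂ => (1 / r) ^ a * Gamma a) {z | 0 < z.re} := by
    intro z (hz : 0 < z.re)
    have hz0 : z ≠ 0 := by
      rintro rfl
      exact hz.ne' zero_re
    have hslit : 1 / z ∈ slitPlane := .inl (by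
      rw [one_div, inv_re]
      exact div_pos hz (normSq_pos.2 hz0))
    exact ((DifferentiableAt.cpow_const (by fun_prop (disch := assumption))
      hslit).mul_const _).differentiableWithinAt
  refine ((differentiableOn_integral_cpow_mul_exp_neg_mul ha).analyticOnNhd
    hopen).eqOn_of_preconnected_of_frequently_eq (hpow.analyticOnNhd hopen)
    (convex_halfSpace_re_gt 0).isPreconnected (z₀ := 1) (by simp) ?_ hr
  have hlim : Tendsto (fun x : ℝ => (x : ℂ)) (𝓝[≠] 1) (𝓝[≠] 1) :=
    tendsto_nhdsWithin_iff.2 ⟨(continuous_ofReal.tendsto' 1 1 ofReal_one).mono_left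
      nhdsWithin_le_nhds, by
        filter_upwards [self_mem_nhdsWithin] with x hx
        simpa using hx⟩
  refine hlim.frequently (Eventually.frequently ?_)
  filter_upwards [mem_nhdsWithin_of_mem_nhds (lt_mem_nhds (zero_lt_one' ℝ))] with x hx
  exact integral_cpow_mul_exp_neg_mul_Ioi ha hx

/-- The function `x ↦ x₊^(a - 1) e^(-cx)`, whose Poisson summation gives Lipschitz's formula. -/
noncomputable def gammaKernel (a c : ℂ) (x : ℝ) : ℂ :=
  ((max x 0 : ℝ) : ℂ) ^ (a - 1) * exp (-(c * x))

theorem gammaKernel_of_pos {a c : ℂ} {x : ℝ} (hx : 0 < x) :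
    gammaKernel a c x = (x : ℂ) ^ (a - 1) * exp (-(c * x)) := by
  rw [gammaKernel, max_eq_left hx.le]

theorem gammaKernel_of_nonpos {a c : ℂ} (ha : 1 < a.re) {x : ℝ} (hx : x ≤ 0) :
    gammaKernel a c x = 0 := by
  have ha1 : a - 1 ≠ 0 := sub_ne_zero.2 fun h => by simp [h] at ha
  rw [gammaKernel, max_eq_right hx, ofReal_zero, zero_cpow ha1, zero_mul]

theorem continuous_gammaKernel {a c : ℂ} (ha : 1 < a.re) : Continuous (gammaKernel a c) := by
  have h : Continuous fun x : ℝ => (x : ℂ) ^ (a - 1) :=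
    continuous_ofReal_cpow_const (by simpa using ha)
  exact (h.comp (continuous_id.max continuous_const)).mul (by fun_prop)

theorem gammaKernel_isBigO {a c : ℂ} (ha : 1 < a.re) (hc : 0 < c.re) (b : ℝ) :
    gammaKernel a c =O[cocompact ℝ] fun x : ℝ => |x| ^ (-b) := by
  rw [cocompact_eq_atBot_atTop]
  refine .sup (.congr' (isBigO_zero _ _) ?_ .rfl) ?_
  · filter_upwards [eventually_le_atBot 0] with x hx
    exact (gammaKernel_of_nonpos ha hx).symm
  have h := (isBigO_refl (fun x : ℝ => x ^ (a.re - 1)) atTop).mul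
    (isLittleO_exp_neg_mul_rpow_atTop hc (1 - a.re - b)).isBigO
  refine .trans (.of_norm_eventuallyLE ?_) (h.congr' .rfl ?_)
  · filter_upwards [eventually_gt_atTop 0] with x hx
    rw [gammaKernel_of_pos hx, norm_cpow_mul_exp_neg_mul hx, sub_re, one_re, neg_mul]
  · filter_upwards [eventually_gt_atTop 0] with x hx
    rw [abs_of_pos hx, ← Real.rpow_add hx]
    ring_nf

theorem fourier_gammaKernel {a c : ℂ} (ha : 1 < a.re) (hc : 0 < c.re) (w : ℝ) :
    𝓕 (gammaKernel a c) w = (1 / (c + 2 * Real.pi * I * w)) ^ a * Gamma a := by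
  rw [Real.fourier_real_eq_integral_exp_smul, ← integral_cpow_mul_exp_neg_mul_of_re_pos
    (by linarith) (by simpa using hc), ← integral_indicator measurableSet_Ioi]
  congr 1 with x
  by_cases hx : 0 < x
  · rw [indicator_of_mem (mem_Ioi.2 hx), gammaKernel_of_pos hx, smul_eq_mul, mul_left_comm,
      ← exp_add]
    congr 2
    push_cast
    ring
  · rw [indicator_of_notMem (notMem_Ioi.2 (not_lt.1 hx)), gammaKernel_of_nonpos ha (not_lt.1 hx),
      smul_zero]

theorem intCast_sub_ne_zero {lam : ℝ} (hlam0 : 0 < lam) (hlam1 : lam < 1) (n : ℤ) :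
    (n : ℝ) - lam ≠ 0 := by
  intro h
  have h0 : (0 : ℝ) < n := by linarith
  have h1 : (n : ℝ) < 1 := by linarith
  norm_cast at h0 h1
  omega

theorem norm_one_div_add_cpow_le {a : ℂ} (ha : 0 ≤ a.re) {x : ℝ} (hx : x ≠ 0) (ε : ℝ) :
    ‖(1 / ((ε : ℂ) + 2 * Real.pi * I * x)) ^ a‖ ≤
      Real.exp (Real.pi * |a.im|) * (1 / |x| ^ a.re) := by
  set z : ℂ := ε + 2 * Real.pi * I * x
  have hxz : |x| ≤ ‖z‖ := by
    refine le_trans ?_ (abs_im_le_norm z)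
    have him : z.im = 2 * Real.pi * x := by simp [z]
    rw [him, abs_mul, abs_of_pos Real.two_pi_pos]
    exact le_mul_of_one_le_left (abs_nonneg x) (by linarith [Real.pi_gt_three])
  have harg : -((1 / z).arg * a.im) ≤ Real.pi * |a.im| :=
    (neg_le_abs _).trans ((abs_mul _ _).trans_le (by gcongr; exact abs_arg_le_pi _))
  have := abs_pos.2 hx
  calc _ ≤ ‖1 / z‖ ^ a.re / Real.exp ((1 / z).arg * a.im) := norm_cpow_le _ _
    _ = Real.exp (-((1 / z).arg * a.im)) * (1 / ‖z‖) ^ a.re := by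
        rw [Real.exp_neg, norm_div, norm_one, div_eq_inv_mul]
    _ ≤ Real.exp (Real.pi * |a.im|) * (1 / |x|) ^ a.re := by gcongr
    _ = _ := by rw [Real.div_rpow zero_le_one (abs_nonneg x), Real.one_rpow]

theorem summable_norm_one_div_bound {a : ℂ} (ha : 1 < a.re) (lam : ℝ) :
    Summable fun n : ℤ => Real.exp (Real.pi * |a.im|) * (1 / |(n : ℝ) - lam| ^ a.re) := by
  simpa only [sub_eq_add_neg] using
    ((Real.summable_one_div_int_add_rpow (-lam) a.re).2 ha).mul_left _

theorem tsum_gammaKernel_eq_lerchSum {a c : ℂ} (ha : 1 < a.re) {α : ℝ} (hα0 : 0 < α)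
    (hα1 : α ≤ 1) :
    ∑' n : ℤ, gammaKernel a c (α + n) = exp (-(c * α)) * lerchSum (exp (-c)) α (1 - a) := by
  have hsupp : Function.support (fun n : ℤ => gammaKernel a c (α + n)) ⊆
      range ((↑) : ℕ → ℤ) := fun n hn => by
    by_contra hneg
    have hn0 : n < 0 := lt_of_not_ge fun h => hneg ⟨n.toNat, Int.toNat_of_nonneg h⟩
    have hn1 : (n : ℝ) ≤ -1 := by exact_mod_cast Int.le_sub_one_of_lt hn0
    exact hn (gammaKernel_of_nonpos ha (by linarith))
  rw [← Nat.cast_injective.tsum_eq hsupp, lerchSum, ← tsum_mul_left]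
  refine tsum_congr fun m => ?_
  have hpos : (0 : ℝ) < α + (m : ℤ) := by rw [Int.cast_natCast]; positivity
  rw [gammaKernel_of_pos hpos, neg_sub, ← exp_nat_mul, ← mul_assoc, ← exp_add, mul_comm]
  push_cast
  ring_nf

/-- The Fourier-side term at `n : ℤ` of the Lipschitz formula for the Lerch series damped by
`exp (-ε * (m + α))`; the undamped terms are those with `ε = 0`. -/
noncomputable def lipschitzTerm (lam α ε : ℝ) (a : ℂ) (n : ℤ) : ℂ :=
  (1 / (ε + 2 * Real.pi * I * ((n - lam : ℝ) : ℂ))) ^ a * Gamma a * exp (2 * Real.pi * I * n * α)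

theorem lipschitz_formula {a : ℂ} (ha : 1 < a.re) {lam α ε : ℝ} (hlam0 : 0 < lam)
    (hlam1 : lam < 1) (hα0 : 0 < α) (hα1 : α ≤ 1) (hε : 0 < ε) :
    exp (-((ε - 2 * Real.pi * I * lam) * α)) *
        lerchSum (exp (-(ε - 2 * Real.pi * I * lam))) α (1 - a) =
      ∑' n : ℤ, lipschitzTerm lam α ε a n := by
  set c : ℂ := ε - 2 * Real.pi * I * lam
  have hc : 0 < c.re := by simpa [c] using hε
  have hfourier : ∀ n : ℤ, 𝓕 (gammaKernel a c) n =
      (1 / (ε + 2 * Real.pi * I * ((n - lam : ℝ) : ℂ))) ^ a * Gamma a := fun n => by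
    rw [fourier_gammaKernel ha hc]
    congr 3
    simp only [c]
    push_cast
    ring
  have hsum : Summable fun n : ℤ => 𝓕 (gammaKernel a c) n := by
    simp_rw [hfourier]
    exact (Summable.of_norm_bounded (summable_norm_one_div_bound ha lam) fun n =>
      norm_one_div_add_cpow_le (by linarith) (intCast_sub_ne_zero hlam0 hlam1 n) ε).mul_right _
  rw [← tsum_gammaKernel_eq_lerchSum ha hα0 hα1,
    Real.tsum_eq_tsum_fourier_of_rpow_decay_of_summable (continuous_gammaKernel ha) one_lt_two
      (gammaKernel_isBigO ha hc 2) hsum α]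
  refine tsum_congr fun n => ?_
  rw [hfourier, fourier_coe_apply, ofReal_one, div_one, lipschitzTerm]

end LipschitzFormula

section FunctionalEquation

open Complex Set Filter Topology
open scoped FourierTransform

theorem inv_two_pi_mul_cpow {w : ℂ} (hw : w ≠ 0) {x : ℝ} (hx : 0 < x) (a : ℂ) :
    (((2 * Real.pi * x)⁻¹ : ℝ) * w) ^ a =
      (2 * Real.pi) ^ (-a) * exp (log w * a) * (x : ℂ) ^ (-a) := by
  have hx0 : (x : ℂ) ≠ 0 := by exact_mod_cast hx.ne'
  have hlog : log (2 * Real.pi) = Real.log (2 * Real.pi) := by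
    rw [ofReal_log Real.two_pi_pos.le]
    push_cast
    rfl
  rw [cpow_def_of_ne_zero (mul_ne_zero (by simp [Real.pi_ne_zero, hx.ne']) hw),
    cpow_def_of_ne_zero (by simp [Real.pi_ne_zero]), cpow_def_of_ne_zero hx0, ← exp_add, ← exp_add,
    log_ofReal_mul (by positivity) hw, Real.log_inv, Real.log_mul Real.two_pi_pos.ne' hx.ne', hlog,
    ← ofReal_log hx.le]
  congr 1
  push_cast
  ring

theorem one_div_two_pi_I_mul_cpow_of_pos {x : ℝ} (hx : 0 < x) (a : ℂ) :
    (1 / (2 * Real.pi * I * x)) ^ a =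
      (2 * Real.pi) ^ (-a) * exp (-Real.pi * I * a / 2) * (x : ℂ) ^ (-a) := by
  have hbase : 1 / (2 * Real.pi * I * x) = ((2 * Real.pi * x)⁻¹ : ℝ) * -I := by
    rw [one_div, mul_right_comm, mul_inv, inv_I]
    push_cast
    rfl
  rw [hbase, inv_two_pi_mul_cpow (neg_ne_zero.2 I_ne_zero) hx, log_neg_I]
  ring_nf

theorem one_div_two_pi_I_mul_cpow_of_neg {x : ℝ} (hx : x < 0) (a : ℂ) :
    (1 / (2 * Real.pi * I * x)) ^ a =
      (2 * Real.pi) ^ (-a) * exp (Real.pi * I * a / 2) * (-x : ℂ) ^ (-a) := by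
  have hbase : 1 / (2 * Real.pi * I * x) = ((2 * Real.pi * -x)⁻¹ : ℝ) * I := by
    rw [one_div, mul_right_comm, mul_inv, inv_I, mul_neg (2 * Real.pi) x, inv_neg]
    push_cast
    ring
  rw [hbase, inv_two_pi_mul_cpow I_ne_zero (neg_pos.2 hx), log_I, ofReal_neg]
  ring_nf

theorem tendsto_one_div_add_two_pi_I_mul_cpow (a : ℂ) {x : ℝ} (hx : x ≠ 0) :
    Tendsto (fun ε : ℝ => (1 / (ε + 2 * Real.pi * I * x)) ^ a) (𝓝[>] 0)
      (𝓝 ((1 / (2 * Real.pi * I * x)) ^ a)) := by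
  have hz : 2 * Real.pi * I * x ≠ 0 := by simp [Real.pi_ne_zero, hx]
  have hadd : Tendsto (fun ε : ℝ => (ε : ℂ) + 2 * Real.pi * I * x) (𝓝[>] 0)
      (𝓝 (2 * Real.pi * I * x)) :=
    ((by fun_prop : Continuous fun ε : ℝ => (ε : ℂ) + 2 * Real.pi * I * x).tendsto' 0 _
      (by simp)).mono_left nhdsWithin_le_nhds
  refine (tendsto_const_nhds.div hadd hz).cpow tendsto_const_nhds (.inr ?_)
  rw [one_div, inv_im]
  exact div_ne_zero (by simp [Real.pi_ne_zero, hx]) (normSq_pos.2 hz).ne'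

theorem fourierChar_ne_one {lam : ℝ} (hlam0 : 0 < lam) (hlam1 : lam < 1) : 𝐞 lam ≠ 1 := by
  rw [Ne, ← Circle.coe_eq_one, Real.fourierChar_apply, exp_eq_one_iff]
  rintro ⟨n, hn⟩
  have him : 2 * Real.pi * lam = 2 * Real.pi * n := by simpa [mul_comm] using congrArg im hn
  have hlam : lam = n := mul_left_cancel₀ Real.two_pi_pos.ne' him
  exact intCast_sub_ne_zero hlam0 hlam1 n (sub_eq_zero.2 hlam.symm)

theorem tendsto_tsum_lipschitzTerm {a : ℂ} (ha : 1 < a.re) {lam : ℝ} (hlam0 : 0 < lam)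
    (hlam1 : lam < 1) (alp : ℝ) :
    Tendsto (fun ε : ℝ => ∑' n : ℤ, lipschitzTerm lam alp ε a n) (𝓝[>] 0)
      (𝓝 (∑' n : ℤ, lipschitzTerm lam alp 0 a n)) := by
  refine tendsto_tsum_of_dominated_convergence
    ((summable_norm_one_div_bound ha lam).mul_right ‖Gamma a‖) (fun n => ?_)
    (.of_forall fun ε n => ?_)
  · simp only [lipschitzTerm, ofReal_zero, zero_add]
    exact ((tendsto_one_div_add_two_pi_I_mul_cpow a
      (intCast_sub_ne_zero hlam0 hlam1 n)).mul_const _).mul_const _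
  · have hexp : ‖exp (2 * Real.pi * I * n * alp)‖ = 1 := by simp [norm_exp]
    rw [lipschitzTerm, norm_mul, norm_mul, hexp, mul_one]
    gcongr
    exact norm_one_div_add_cpow_le (by linarith) (intCast_sub_ne_zero hlam0 hlam1 n) ε

theorem IsLerch.exp_mul_one_sub_eq_tsum {lam alp : ℝ} {F : ℂ → ℂ} (hF : IsLerch lam alp F)
    (hlam0 : 0 < lam) (hlam1 : lam < 1) (halp0 : 0 < alp) (halp1 : alp ≤ 1) {a : ℂ}
    (ha : 1 < a.re) (him : a.im < 0) :
    exp (2 * Real.pi * I * lam * alp) * F (1 - a) = ∑' n : ℤ, lipschitzTerm lam alp 0 a n := by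
  have hu : Tendsto (fun ε : ℝ => exp (-(ε - 2 * Real.pi * I * lam))) (𝓝[>] 0) (𝓝 (𝐞 lam)) :=
    ((by fun_prop : Continuous fun ε : ℝ => exp (-(ε - 2 * Real.pi * I * lam))).tendsto' 0 _ (by
      rw [Real.fourierChar_apply]
      congr 1
      push_cast
      ring)).mono_left nhdsWithin_le_nhds
  have hnorm : ∀ᶠ ε : ℝ in 𝓝[>] 0, ‖exp (-(ε - 2 * Real.pi * I * lam))‖ < 1 := by
    filter_upwards [self_mem_nhdsWithin] with ε (hε : 0 < ε)
    simpa [norm_exp] using hε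
  have hfactor : Tendsto (fun ε : ℝ => exp (-((ε - 2 * Real.pi * I * lam) * alp))) (𝓝[>] 0)
      (𝓝 (exp (2 * Real.pi * I * lam * alp))) :=
    ((by fun_prop : Continuous fun ε : ℝ => exp (-((ε - 2 * Real.pi * I * lam) * alp))).tendsto' 0 _
      (by simp)).mono_left nhdsWithin_le_nhds
  have hleft := hfactor.mul (hF.tendsto_lerchSum halp0 (fourierChar_ne_one hlam0 hlam1) hu hnorm
    (s := 1 - a) (by simpa using him))
  refine tendsto_nhds_unique hleft
    ((tendsto_tsum_lipschitzTerm ha hlam0 hlam1 alp).congr' ?_)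
  filter_upwards [self_mem_nhdsWithin] with ε hε
  exact (lipschitz_formula ha hlam0 hlam1 halp0 halp1 hε).symm

theorem lipschitzTerm_neg_natCast {lam : ℝ} (hlam0 : 0 < lam) (alp : ℝ) (a : ℂ) (m : ℕ) :
    lipschitzTerm lam alp 0 a (-m) =
      (2 * Real.pi) ^ (-a) * Gamma a * exp (Real.pi * I * a / 2) *
        ((𝐞 (-alp) : ℂ) ^ m * ((m + lam : ℝ) : ℂ) ^ (-a)) := by
  have hm : ((-m : ℤ) - lam : ℝ) < 0 := by
    push_cast
    linarith [(Nat.cast_nonneg m : (0 : ℝ) ≤ m)]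
  rw [lipschitzTerm, ofReal_zero, zero_add, one_div_two_pi_I_mul_cpow_of_neg hm,
    Real.fourierChar_apply, ← exp_nat_mul]
  push_cast
  ring_nf

theorem lipschitzTerm_natCast_add_one {lam : ℝ} (hlam1 : lam < 1) (alp : ℝ) (a : ℂ) (m : ℕ) :
    lipschitzTerm lam alp 0 a (m + 1) = (2 * Real.pi) ^ (-a) * Gamma a *
      (exp (-Real.pi * I * a / 2) * exp (2 * Real.pi * I * alp)) *
        ((𝐞 alp : ℂ) ^ m * ((m + (1 - lam) : ℝ) : ℂ) ^ (-a)) := by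
  have hm : 0 < (((m : ℤ) + 1 : ℤ) - lam : ℝ) := by
    push_cast
    linarith [(Nat.cast_nonneg m : (0 : ℝ) ≤ m)]
  have hexp : exp (2 * Real.pi * I * (((m : ℤ) + 1 : ℤ) : ℂ) * alp) =
      exp (2 * Real.pi * I * alp) * exp (m * ((2 * Real.pi * alp : ℝ) * I)) := by
    rw [← exp_add]
    congr 1
    push_cast
    ring
  rw [lipschitzTerm, ofReal_zero, zero_add, one_div_two_pi_I_mul_cpow_of_pos hm,
    Real.fourierChar_apply, ← exp_nat_mul, hexp]
  push_cast
  ring_nf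

theorem tsum_lipschitzTerm {lam : ℝ} (hlam0 : 0 < lam) (hlam1 : lam < 1)
    (alp : ℝ) {a : ℂ} (ha : 1 < a.re) :
    ∑' n : ℤ, lipschitzTerm lam alp 0 a n =
      (2 * Real.pi) ^ (-a) * Gamma a * (exp (Real.pi * I * a / 2) * lerchSum (𝐞 (-alp)) lam a +
        exp (-Real.pi * I * a / 2) * exp (2 * Real.pi * I * alp) *
          lerchSum (𝐞 alp) (1 - lam) a) := by
  have hpos (m : ℕ) := lipschitzTerm_natCast_add_one hlam1 alp a m
  have hneg (m : ℕ) := lipschitzTerm_neg_natCast hlam0 alp a m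
  have hsum : ∀ (x : ℝ) {y : ℝ}, 0 < y → Summable fun m : ℕ =>
      (𝐞 x : ℂ) ^ m * ((m + y : ℝ) : ℂ) ^ (-a) := fun x y hy =>
    summable_pow_mul_cpow_of_one_lt_re (Circle.norm_coe _).le hy.le ha
  rw [← (Equiv.neg ℤ).tsum_eq, tsum_of_nat_of_neg_add_one
    (((hsum _ hlam0).mul_left _).congr fun m => (hneg m).symm)
    (((hsum _ (sub_pos.2 hlam1)).mul_left _).congr fun m => by
      rw [Equiv.neg_apply, neg_neg, hpos])]
  simp only [Equiv.neg_apply, neg_neg, hneg, hpos, tsum_mul_left]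
  rw [lerchSum, lerchSum]
  ring

theorem IsLerch.eq_hurwitzZeta {alp : ℝ} {F : ℂ → ℂ} (hF : IsLerch 1 alp F) (halp0 : 0 < alp)
    (halp1 : alp ≤ 1) {s : ℂ} (hs : 0 < s.im) :
    F s = HurwitzZeta.hurwitzZeta (alp : UnitAddCircle) s := by
  refine eqOn_of_eqOn_one_lt_re (A := s.re - 1) (fun z _ hz => hF.1 z (ne_one_of_im_pos hz))
    (fun z _ hz => HurwitzZeta.differentiableAt_hurwitzZeta _ (ne_one_of_im_pos hz))
    (fun z hz _ => ?_) (by linarith) hs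
  rw [hF.2 z hz, ← (HurwitzZeta.hasSum_hurwitzZeta_of_one_lt_re ⟨halp0.le, halp1⟩ hz).tsum_eq,
    lerchSeries]
  refine tsum_congr fun m => ?_
  rw [ofReal_one, mul_one, mul_comm, exp_nat_mul_two_pi_mul_I]

theorem expZeta_eq_lerchSum_zero (x : ℝ) {s : ℂ} (hs : 1 < s.re) :
    HurwitzZeta.expZeta (x : UnitAddCircle) s = lerchSum (𝐞 x) 0 s := by
  rw [← (HurwitzZeta.hasSum_expZeta_of_one_lt_re x hs).tsum_eq, lerchSum]
  refine tsum_congr fun m => ?_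
  rw [Real.fourierChar_apply, ← exp_nat_mul, cpow_neg, div_eq_mul_inv]
  push_cast
  ring_nf

theorem expZeta_eq_mul_lerchSum_one (x : ℝ) {s : ℂ} (hs : 1 < s.re) :
    HurwitzZeta.expZeta (x : UnitAddCircle) s = 𝐞 x * lerchSum (𝐞 x) 1 s := by
  have hsum := HurwitzZeta.hasSum_expZeta_of_one_lt_re x hs
  have hs0 : s ≠ 0 := fun h => by norm_num [h] at hs
  rw [← hsum.tsum_eq, hsum.summable.tsum_eq_zero_add, Nat.cast_zero, zero_cpow hs0, div_zero,
    zero_add, lerchSum, ← tsum_mul_left]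
  refine tsum_congr fun m => ?_
  rw [← mul_assoc, ← pow_succ', Real.fourierChar_apply, ← exp_nat_mul, cpow_neg, div_eq_mul_inv]
  push_cast
  ring_nf

theorem IsLerch.functional_equation {lam alp : ℝ} {F : ℂ → ℂ} (hF : IsLerch lam alp F)
    (hlam0 : 0 < lam) (hlam1 : lam ≤ 1) (halp0 : 0 < alp) (halp1 : alp ≤ 1) {a : ℂ}
    (ha : 1 < a.re) (him : a.im < 0) :
    F (1 - a) = (2 * Real.pi) ^ (-a) * Gamma a * exp (-(2 * Real.pi * I * lam * alp)) *
      (exp (Real.pi * I * a / 2) * lerchSum (𝐞 (-alp)) lam a +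
        exp (-Real.pi * I * a / 2) * exp (2 * Real.pi * I * alp) *
          lerchSum (𝐞 alp) (1 - lam) a) := by
  rcases hlam1.lt_or_eq with hlam | rfl
  · refine mul_left_cancel₀ (exp_ne_zero (2 * Real.pi * I * lam * alp)) ?_
    rw [hF.exp_mul_one_sub_eq_tsum hlam0 hlam halp0 halp1 ha him,
      tsum_lipschitzTerm hlam0 hlam alp ha, exp_neg]
    field_simp
  · have hpole : ∀ n : ℕ, a ≠ -n := by
      rintro n rfl
      simp at him
    have ha1 : a ≠ 1 := fun h => by simp [h] at ha
    have hcoe : -(alp : UnitAddCircle) = ((-alp : ℝ) : UnitAddCircle) := by simp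
    have hchar : exp (-(2 * Real.pi * I * alp)) = 𝐞 (-alp) := by
      rw [Real.fourierChar_apply]
      congr 1
      push_cast
      ring
    have hinv : exp (-(2 * Real.pi * I * alp)) * exp (2 * Real.pi * I * alp) = 1 := by
      rw [← exp_add, neg_add_cancel, exp_zero]
    rw [hF.eq_hurwitzZeta halp0 halp1 (by simpa using him),
      HurwitzZeta.hurwitzZeta_one_sub _ hpole (.inr ha1), hcoe, expZeta_eq_lerchSum_zero _ ha,
      expZeta_eq_mul_lerchSum_one _ ha, sub_self, ofReal_one, mul_one, ← hchar]
    linear_combination -((2 * Real.pi) ^ (-a) * Gamma a * exp (-Real.pi * I * a / 2) *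
      lerchSum (𝐞 alp) 0 a) * hinv

end FunctionalEquation

section VerticalEdge

open Complex Set Filter Topology Asymptotics

theorem abs_im_integral_logDeriv_vertical_sub_le {f A : ℂ → ℂ} {x c d : ℝ} (hcd : c ≤ d)
    (hf : ∀ y ∈ Icc c d, AnalyticAt ℂ f (x + y * I))
    (hA : ∀ y ∈ Icc c d, DifferentiableAt ℂ A (x + y * I))
    (happrox : ∀ y ∈ Icc c d, ‖exp (-A (x + y * I)) * f (x + y * I) - 1‖ < 1) :
    |(I * ∫ y in c..d, logDeriv f (x + y * I)).im -
      ((A (x + d * I)).im - (A (x + c * I)).im)| ≤ 2 * Real.pi := by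
  set g : ℂ → ℂ := fun s => exp (-A s) * f s
  have hslit : ∀ y ∈ Icc c d, g (x + y * I) ∈ slitPlane := fun y hy => by
    simpa using mem_slitPlane_of_norm_lt_one (happrox y hy)
  have hne : ∀ y ∈ Icc c d, f (x + y * I) ≠ 0 := fun y hy h0 =>
    slitPlane_ne_zero (hslit y hy) (by simp only [g, h0, mul_zero])
  have hprimitive : ∀ y ∈ Icc c d,
      HasDerivAt (fun s => A s + log (g s)) (logDeriv f (x + y * I)) (x + y * I) := fun y hy => by
    have hAd := (hA y hy).hasDerivAt
    have hfd := (hf y hy).differentiableAt.hasDerivAt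
    refine (hAd.add ((hAd.fun_neg.cexp.fun_mul hfd).clog (hslit y hy))).congr_deriv ?_
    have hexp := exp_ne_zero (-A (x + y * I))
    have hfne := hne y hy
    rw [logDeriv_apply]
    field_simp
    ring
  have hcont : ContinuousOn (fun y : ℝ => logDeriv f (x + y * I)) (uIcc c d) := by
    rw [uIcc_of_le hcd]
    exact fun y hy => (ContinuousAt.comp (f := fun y : ℝ => (x : ℂ) + y * I)
      ((hf y hy).deriv.continuousAt.div (hf y hy).continuousAt (hne y hy))
      (by fun_prop)).continuousWithinAt
  rw [I_mul_integral_vertical_eq_sub (by rwa [uIcc_of_le hcd]) hcont, sub_im, add_im, add_im,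
    log_im, log_im, add_sub_add_comm, add_sub_cancel_left, two_mul]
  exact (abs_sub _ _).trans (add_le_add (abs_arg_le_pi _) (abs_arg_le_pi _))

theorem isBigO_im_integral_logDeriv_vertical_sub {f A : ℂ → ℂ} {x c : ℝ}
    (hf : ∀ y, c ≤ y → AnalyticAt ℂ f (x + y * I))
    (hA : ∀ y, c ≤ y → DifferentiableAt ℂ A (x + y * I))
    (happrox : ∀ y, c ≤ y → ‖exp (-A (x + y * I)) * f (x + y * I) - 1‖ < 1) :
    (fun T : ℝ => (I * ∫ y in c..T, logDeriv f (x + y * I)).im - (A (x + T * I)).im)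
      =O[atTop] (1 : ℝ → ℝ) := by
  refine .of_bound (2 * Real.pi + |(A (x + c * I)).im|) ?_
  filter_upwards [eventually_ge_atTop c] with T hT
  have hbound := abs_im_integral_logDeriv_vertical_sub_le hT (fun y hy => hf y hy.1)
    (fun y hy => hA y hy.1) fun y hy => happrox y hy.1
  rw [Pi.one_apply, norm_one, mul_one, Real.norm_eq_abs]
  calc _ = |_ - ((A (x + T * I)).im - (A (x + c * I)).im) - (A (x + c * I)).im| := by
        rw [sub_sub, sub_add_cancel]
    _ ≤ _ := (abs_sub _ _).trans (by gcongr)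

theorem IsLerch.isBigO_im_integral_logDeriv_right {lam alp : ℝ} {F : ℂ → ℂ}
    (hF : IsLerch lam alp F) (halp : 0 < alp) {c : ℝ} (hc : 0 < c) :
    (fun T : ℝ => (I * ∫ y in c..T, logDeriv F ((1 + alp : ℝ) + y * I)).im + T * Real.log alp)
      =O[atTop] (1 : ℝ → ℝ) := by
  obtain ⟨r, hr, happrox⟩ := hF.exists_norm_cpow_mul_sub_one_le halp
  have h := isBigO_im_integral_logDeriv_vertical_sub (f := F) (x := 1 + alp)
    (A := fun s => -(Real.log alp * s)) (fun y hy => hF.analyticAt (ne_one_of_im_pos (by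
      simpa using hc.trans_le hy))) (fun y _ => by fun_prop) fun y _ => by
      rw [neg_neg, ofReal_log halp.le, ← cpow_def_of_ne_zero (by exact_mod_cast halp.ne')]
      exact (happrox _ (by simp)).trans_lt hr
  refine h.congr_left fun T => ?_
  simp [mul_comm]

/-- The logarithm of the leading term which the functional equation gives for the Lerch
zeta-function on the left of the critical strip. -/
noncomputable def lerchPhase (lam alp : ℝ) (s : ℂ) : ℂ :=
  logGamma (1 - s) + (1 - s) * (Real.pi / 2 * I - Real.log (2 * Real.pi * lam)) -
    2 * Real.pi * I * lam * alp

theorem differentiableAt_lerchPhase (lam alp : ℝ) {s : ℂ} (hs : s.re < 1) :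
    DifferentiableAt ℂ (lerchPhase lam alp) s := by
  have hGamma : DifferentiableAt ℂ (fun s => logGamma (1 - s)) s :=
    (differentiableAt_logGamma (by simpa using hs)).comp s (by fun_prop)
  unfold lerchPhase
  fun_prop

theorem exp_lerchPhase {lam : ℝ} (hlam : 0 < lam) (alp : ℝ) {s : ℂ} (hs : s.re < 1) :
    exp (lerchPhase lam alp s) = (2 * Real.pi) ^ (-(1 - s)) * Gamma (1 - s) *
      exp (-(2 * Real.pi * I * lam * alp)) * exp (Real.pi * I * (1 - s) / 2) *
        (lam : ℂ) ^ (-(1 - s)) := by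
  have hbase : (2 * Real.pi : ℂ) ^ (-(1 - s)) * (lam : ℂ) ^ (-(1 - s)) =
      exp (Real.log (2 * Real.pi * lam) * -(1 - s)) := by
    rw [ofReal_log (by positivity), ← cpow_def_of_ne_zero (by
      exact_mod_cast (by positivity : 2 * Real.pi * lam ≠ 0)), ofReal_mul,
      mul_cpow_ofReal_nonneg Real.two_pi_pos.le hlam.le]
    push_cast
    rfl
  rw [← exp_logGamma (by simpa using hs : 0 < (1 - s).re)]
  calc exp (lerchPhase lam alp s) = exp (logGamma (1 - s)) *
        exp (-(2 * Real.pi * I * lam * alp)) * exp (Real.pi * I * (1 - s) / 2) *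
          exp (Real.log (2 * Real.pi * lam) * -(1 - s)) := by
        rw [← exp_add, ← exp_add, ← exp_add, lerchPhase]
        congr 1
        ring
    _ = _ := by
        rw [← hbase]
        ring

theorem IsLerch.exp_neg_lerchPhase_mul {lam alp : ℝ} {F : ℂ → ℂ} (hF : IsLerch lam alp F)
    (hlam0 : 0 < lam) (hlam1 : lam ≤ 1) (halp0 : 0 < alp) (halp1 : alp ≤ 1) {s : ℂ}
    (hs : s.re < 0) (him : 0 < s.im) :
    exp (-lerchPhase lam alp s) * F s =
      (lam : ℂ) ^ (1 - s) * lerchSum (Real.fourierChar (-alp)) lam (1 - s) +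
        (lam : ℂ) ^ (1 - s) * exp (-(Real.pi * I * (1 - s))) * exp (2 * Real.pi * I * alp) *
          lerchSum (Real.fourierChar alp) (1 - lam) (1 - s) := by
  have hFE := hF.functional_equation hlam0 hlam1 halp0 halp1 (a := 1 - s)
    (by rw [sub_re, one_re]; linarith) (by simpa using him)
  have hhalf : exp (-Real.pi * I * (1 - s) / 2) =
      exp (Real.pi * I * (1 - s) / 2) * exp (-(Real.pi * I * (1 - s))) := by
    rw [← exp_add]
    congr 1
    ring
  have hpow : (lam : ℂ) ^ (1 - s) ≠ 0 := cpow_ne_zero_iff.2 (.inl (by exact_mod_cast hlam0.ne'))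
  rw [sub_sub_cancel, hhalf] at hFE
  rw [exp_neg, inv_mul_eq_iff_eq_mul₀ (exp_ne_zero _), exp_lerchPhase hlam0 alp (by linarith), hFE]
  rw [cpow_neg (lam : ℂ)]
  field_simp

theorem IsLerch.eventually_norm_exp_neg_lerchPhase_mul_sub_one_lt {lam alp : ℝ} {F : ℂ → ℂ}
    (hF : IsLerch lam alp F) (hlam0 : 0 < lam) (hlam1 : lam ≤ 1) (halp0 : 0 < alp)
    (halp1 : alp ≤ 1) {σ : ℝ} (hσ : σ ≤ -lam) :
    ∀ᶠ t : ℝ in atTop,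
      ‖exp (-lerchPhase lam alp (σ + t * I)) * F (σ + t * I) - 1‖ < 1 := by
  obtain ⟨r, hr, happrox⟩ := exists_norm_cpow_mul_lerchSum_sub_one_le hlam0
  set C : ℝ := lam ^ (1 - σ) * ∑' m : ℕ, ((m : ℝ) + (1 - lam)) ^ (-(1 - σ))
  have hlim : Tendsto (fun t : ℝ => r + C * Real.exp (-(Real.pi * t))) atTop (𝓝 (r + C * 0)) :=
    ((Real.tendsto_exp_neg_atTop_nhds_zero.comp
      (tendsto_id.const_mul_atTop Real.pi_pos)).const_mul C).const_add r
  filter_upwards [hlim.eventually_lt_const (by simpa using hr), eventually_gt_atTop 0] with t ht ht0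
  set s : ℂ := σ + t * I
  have hre : (1 - s).re = 1 - σ := by simp [s]
  have hexp : ‖exp (-(Real.pi * I * (1 - s))) * exp (2 * Real.pi * I * alp)‖ =
      Real.exp (-(Real.pi * t)) := by
    rw [← exp_add, norm_exp]
    simp [s]
  have hsum := norm_lerchSum_le (z := Real.fourierChar alp) (s := 1 - s) (Circle.norm_coe _).le
    (sub_nonneg.2 hlam1) (by rw [hre]; linarith)
  rw [hF.exp_neg_lerchPhase_mul hlam0 hlam1 halp0 halp1 (by simp [s]; linarith)
    (by simpa [s] using ht0), add_sub_right_comm]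
  refine lt_of_le_of_lt ((norm_add_le _ _).trans (add_le_add (happrox _ _ (Circle.norm_coe _).le
    (by rw [hre]; linarith)) ?_)) ht
  rw [mul_assoc ((lam : ℂ) ^ (1 - s)), norm_mul, norm_mul, hexp,
    norm_cpow_eq_rpow_re_of_pos hlam0, hre, mul_right_comm]
  rw [hre] at hsum
  gcongr
  exact mul_le_mul_of_nonneg_left hsum (by positivity)

theorem isBigO_im_lerchPhase {lam : ℝ} (alp : ℝ) {σ : ℝ} (hσ : σ < 1) :
    (fun T : ℝ => (lerchPhase lam alp (σ + T * I)).im +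
      (T * Real.log T - T - T * Real.log (2 * Real.pi * lam))) =O[atTop] (1 : ℝ → ℝ) := by
  refine .of_bound (((1 - σ) + 2) ^ 2 + |(1 - σ) * (Real.pi / 2) - 2 * Real.pi * lam * alp|) ?_
  filter_upwards [eventually_ge_atTop 1] with T hT
  have hGamma := abs_im_logGamma_sub_le (sub_pos.2 hσ) hT
  have hconj := im_logGamma_neg (sub_pos.2 hσ) T
  have harg : (1 : ℂ) - (σ + T * I) = (1 - σ : ℝ) + (-T : ℝ) * I := by
    push_cast
    ring
  have him : (lerchPhase lam alp (σ + T * I)).im +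
      (T * Real.log T - T - T * Real.log (2 * Real.pi * lam)) =
      -((logGamma ((1 - σ : ℝ) + T * I)).im - (T * Real.log T - T)) +
        ((1 - σ) * (Real.pi / 2) - 2 * Real.pi * lam * alp) := by
    rw [lerchPhase, harg, sub_im, add_im, hconj]
    simp
    ring
  rw [him, Pi.one_apply, norm_one, mul_one, Real.norm_eq_abs]
  exact (abs_add_le _ _).trans (by rw [abs_neg]; gcongr)

theorem IsLerch.eventually_isBigO_im_integral_logDeriv_left {lam alp : ℝ} {F : ℂ → ℂ}
    (hF : IsLerch lam alp F) (hlam0 : 0 < lam) (hlam1 : lam ≤ 1) (halp0 : 0 < alp)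
    (halp1 : alp ≤ 1) {σ : ℝ} (hσ : σ ≤ -lam) :
    ∀ᶠ c : ℝ in atTop, (fun T : ℝ => (I * ∫ y in c..T, logDeriv F (σ + y * I)).im +
      (T * Real.log T - T - T * Real.log (2 * Real.pi * lam))) =O[atTop] (1 : ℝ → ℝ) := by
  filter_upwards [eventually_forall_ge_atTop.2
    (hF.eventually_norm_exp_neg_lerchPhase_mul_sub_one_lt hlam0 hlam1 halp0 halp1 hσ),
    eventually_gt_atTop 0] with c happrox hc
  have hσ1 : σ < 1 := by linarith
  have h := isBigO_im_integral_logDeriv_vertical_sub (f := F) (A := lerchPhase lam alp)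
    (fun y hy => hF.analyticAt (ne_one_of_im_pos (by simpa using hc.trans_le hy)))
    (fun y _ => differentiableAt_lerchPhase lam alp (by simpa using hσ1)) happrox
  exact (h.add (isBigO_im_lerchPhase (lam := lam) alp hσ1)).congr_left fun T => by ring

theorem IsLerch.eventually_ne_zero_left {lam alp : ℝ} {F : ℂ → ℂ} (hF : IsLerch lam alp F)
    (hlam0 : 0 < lam) (hlam1 : lam ≤ 1) (halp0 : 0 < alp) (halp1 : alp ≤ 1) {σ : ℝ}
    (hσ : σ ≤ -lam) : ∀ᶠ t : ℝ in atTop, F (σ + t * I) ≠ 0 := by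
  filter_upwards [hF.eventually_norm_exp_neg_lerchPhase_mul_sub_one_lt hlam0 hlam1 halp0 halp1 hσ]
    with t ht h0
  simp [h0] at ht

end VerticalEdge

section HorizontalEdge

open Complex Set Filter Topology Asymptotics Metric

/-- The heights at which `F` has no zero with real part in `[a, b]`; the argument principle applies
to rectangles whose horizontal sides lie at such heights. -/
def zeroFreeHeights (F : ℂ → ℂ) (a b : ℝ) : Set ℝ :=
  {T | ∀ x ∈ Icc a b, F (x + T * I) ≠ 0}

theorem IsLerch.exists_mem_zeroFreeHeights {lam alp : ℝ} {F : ℂ → ℂ} (hF : IsLerch lam alp F)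
    (halp : 0 < alp) (a b : ℝ) {t u : ℝ} (ht : 0 ≤ t) (htu : t < u) :
    ∃ T ∈ Ioo t u, T ∈ zeroFreeHeights F a b := by
  have hfin := (hF.finite_zeros_of_isCompact halp (K := Icc a b ×ℂ Icc t u)
    (isCompact_Icc.reProdIm isCompact_Icc)).image im
  obtain ⟨T, hT, hTzero⟩ := ((Ioo_infinite htu).sdiff hfin).nonempty
  refine ⟨T, hT, fun x hx h0 => hTzero ⟨x + T * I, ⟨?_, ?_, h0⟩, by simp⟩⟩
  · simpa [mem_reProdIm] using ⟨hx, Ioo_subset_Icc_self hT⟩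
  · simpa using ht.trans_lt hT.1

theorem IsLerch.exists_pos_le_norm_right {lam alp : ℝ} {F : ℂ → ℂ} (hF : IsLerch lam alp F)
    (halp : 0 < alp) : ∃ e > 0, ∀ t : ℝ, e ≤ ‖F ((1 + alp : ℝ) + t * I)‖ := by
  obtain ⟨r, hr, happrox⟩ := hF.exists_norm_cpow_mul_sub_one_le halp
  refine ⟨(1 - r) / alp ^ (1 + alp), div_pos (sub_pos.2 hr) (by positivity), fun t => ?_⟩
  set s : ℂ := (1 + alp : ℝ) + t * I
  have hre : s.re = 1 + alp := by simp [s]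
  rw [div_le_iff₀' (by positivity), ← hre, ← norm_cpow_eq_rpow_re_of_pos halp, ← norm_mul]
  have htriangle := norm_sub_norm_le 1 (1 - (alp : ℂ) ^ s * F s)
  rw [sub_sub_cancel, norm_one, norm_sub_rev] at htriangle
  linarith [happrox s hre.ge]

theorem isBigO_log_const_mul_two_mul_pow {D : ℝ} (hD : 0 < D) (N : ℕ) :
    (fun T : ℝ => 8 * Real.log (D * (2 * T) ^ N)) =O[atTop] Real.log := by
  have hconst := (Real.isLittleO_const_log_atTop (c := Real.log D + N * Real.log 2)).isBigO
  refine ((hconst.add ((isBigO_refl Real.log atTop).const_mul_left N)).const_mul_left 8).congr' ?_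
    .rfl
  filter_upwards [eventually_gt_atTop 0] with T hT
  rw [Real.log_mul hD.ne' (by positivity), Real.log_pow, Real.log_mul two_ne_zero hT.ne']
  ring

theorem mem_upperStrip_of_mem_closedBall {σ T R : ℝ} {z : ℂ}
    (hz : z ∈ closedBall ((σ : ℂ) + T * I) R) (hT : R + 1 ≤ T) :
    z ∈ upperStrip (σ - R) (σ + R) := by
  rw [mem_closedBall, dist_eq_norm] at hz
  have hre := abs_le.1 ((abs_re_le_norm _).trans hz)
  have him := abs_le.1 ((abs_im_le_norm _).trans hz)
  simp only [sub_re, sub_im, add_re, add_im, re_ofReal_mul, im_ofReal_mul, ofReal_re, ofReal_im,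
    I_re, I_im] at hre him
  exact ⟨⟨by linarith, by linarith⟩, (by linarith : 1 ≤ z.im)⟩

theorem norm_le_two_mul_of_mem_closedBall {σ T R : ℝ} (hσ : 0 ≤ σ) (hR : 0 ≤ R) (hT : R + σ ≤ T)
    {z : ℂ} (hz : z ∈ closedBall ((σ : ℂ) + T * I) R) : ‖z‖ ≤ 2 * T := by
  have hc : ‖(σ : ℂ) + T * I‖ ≤ σ + T := by
    refine (norm_add_le _ _).trans_eq ?_
    rw [norm_mul, norm_I, mul_one, norm_real, norm_real, Real.norm_of_nonneg hσ,
      Real.norm_of_nonneg (by linarith)]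
  linarith [norm_le_norm_add_const_of_dist_le (mem_closedBall.1 hz)]

theorem IsLerch.isBigO_im_integral_logDeriv_horizontal {lam alp : ℝ} {F : ℂ → ℂ}
    (hF : IsLerch lam alp F) (halp : 0 < alp) {σ : ℝ} (hσ : σ ≤ 1 + alp) :
    (fun T : ℝ => (∫ x in σ..(1 + alp), logDeriv F (x + T * I)).im)
      =O[atTop ⊓ 𝓟 (zeroFreeHeights F σ (1 + alp))] Real.log := by
  obtain ⟨e, he, hlower⟩ := hF.exists_pos_le_norm_right halp
  set R : ℝ := 8 * (2 + alp - σ)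
  have hR : 0 < R := by linarith
  obtain ⟨N, hN⟩ := hF.hasPolyGrowth halp (1 + alp - R) (1 + alp + R)
  obtain ⟨C, hC, hbound⟩ := hN.exists_pos
  rw [isBigOWith_principal] at hbound
  have hD : 0 < C / e + 2 := by positivity
  refine .trans (.of_bound 1 ?_) ((isBigO_log_const_mul_two_mul_pow hD N).mono inf_le_left)
  rw [eventually_inf_principal]
  filter_upwards [eventually_ge_atTop (R + (1 + alp))] with T hT hne
  set c : ℂ := (1 + alp : ℝ) + T * I
  have hc : e ≤ ‖F c‖ := hlower T
  have hTpow : 1 ≤ (2 * T) ^ N := one_le_pow₀ (by linarith)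
  have hball : ∀ z ∈ closedBall c R, z ∈ upperStrip (1 + alp - R) (1 + alp + R) ∧ ‖z‖ ≤ 2 * T :=
    fun z hz =>
      ⟨mem_upperStrip_of_mem_closedBall hz (by linarith),
        norm_le_two_mul_of_mem_closedBall (by linarith) hR.le hT hz⟩
  rw [one_mul, Real.norm_eq_abs]
  refine (abs_im_integral_logDeriv_le (c := c) hR (fun z hz => hF.analyticAt (ne_one_of_im_pos
    (zero_lt_one.trans_le (hball z hz).1.2))) (M := (C / e + 2) * (2 * T) ^ N) ?_
    (norm_pos_iff.1 (he.trans_le hc)) (fun z hz => ?_) (fun x hx => ?_) ?_).trans (le_abs_self _)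
  · nlinarith [div_pos hC he]
  · calc ‖F z‖ ≤ C * ‖z‖ ^ N := (hbound z (hball z hz).1).trans_eq (by rw [norm_pow])
      _ ≤ C * (2 * T) ^ N := by gcongr; exact (hball z hz).2
      _ = C / e * (2 * T) ^ N * e := by field_simp
      _ ≤ (C / e + 2) * (2 * T) ^ N * ‖F c‖ := by gcongr; linarith
  · rw [uIcc_of_le hσ] at hx
    rw [mem_closedBall, dist_add_right, dist_eq_norm, ← ofReal_sub, norm_real, Real.norm_eq_abs,
      abs_le]
    constructor <;> linarith [hx.1, hx.2]
  · rwa [uIcc_of_le hσ]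

end HorizontalEdge

section ZeroCount

open Complex Set Filter Topology Asymptotics

/-- The nontrivial zeros with imaginary part between `0` and `T`. -/
def nontrivialZeros (F : ℂ → ℂ) (alp T : ℝ) : Set ℂ :=
  {ρ | F ρ = 0 ∧ -1 ≤ ρ.re ∧ ρ.re < 1 + alp ∧ 0 < ρ.im ∧ ρ.im < T}

/-- The counting function `N(λ, α, T)` of the nontrivial zeros, with multiplicity. -/
noncomputable def zeroCount (F : ℂ → ℂ) (alp T : ℝ) : ℝ :=
  ∑ᶠ ρ ∈ nontrivialZeros F alp T, (zeroOrder F ρ : ℝ)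

theorem nontrivialZeros_subset (F : ℂ → ℂ) (alp : ℝ) {T U : ℝ} (hTU : T ≤ U) :
    nontrivialZeros F alp T ⊆ nontrivialZeros F alp U :=
  fun _ ⟨hzero, hre, hre', him, him'⟩ => ⟨hzero, hre, hre', him, him'.trans_le hTU⟩

theorem IsLerch.finite_nontrivialZeros {lam alp : ℝ} {F : ℂ → ℂ} (hF : IsLerch lam alp F)
    (halp : 0 < alp) (T : ℝ) : (nontrivialZeros F alp T).Finite :=
  (hF.finite_zeros_of_isCompact halp (K := Icc (-1) (1 + alp) ×ℂ Icc 0 T)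
    (isCompact_Icc.reProdIm isCompact_Icc)).subset fun _ ⟨hzero, hre, hre', him, him'⟩ =>
      ⟨⟨⟨hre, hre'.le⟩, him.le, him'.le⟩, him, hzero⟩

theorem IsLerch.zeroCount_sub_zeroCount {lam alp : ℝ} {F : ℂ → ℂ} (hF : IsLerch lam alp F)
    (halp : 0 < alp) {T U : ℝ} (hTU : T ≤ U) :
    zeroCount F alp U - zeroCount F alp T =
      ∑ ρ ∈ (hF.finite_nontrivialZeros halp U).toFinset \
        (hF.finite_nontrivialZeros halp T).toFinset, (zeroOrder F ρ : ℝ) := by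
  rw [zeroCount, zeroCount, finsum_mem_eq_finite_toFinset_sum _ (hF.finite_nontrivialZeros halp U),
    finsum_mem_eq_finite_toFinset_sum _ (hF.finite_nontrivialZeros halp T), sub_eq_iff_eq_add]
  exact (Finset.sum_sdiff (Finite.toFinset_subset_toFinset.2
    (nontrivialZeros_subset F alp hTU))).symm

theorem IsLerch.monotone_zeroCount {lam alp : ℝ} {F : ℂ → ℂ} (hF : IsLerch lam alp F)
    (halp : 0 < alp) : Monotone (zeroCount F alp) := fun T U hTU => by
  rw [← sub_nonneg, hF.zeroCount_sub_zeroCount halp hTU]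
  positivity

theorem IsLerch.rectIntegral_logDeriv_eq_zeroCount {lam alp : ℝ} {F : ℂ → ℂ}
    (hF : IsLerch lam alp F) (halp : 0 < alp) {T U : ℝ} (hT0 : 0 < T) (hTU : T ≤ U)
    (hT : T ∈ zeroFreeHeights F (-1) (1 + alp)) (hU : U ∈ zeroFreeHeights F (-1) (1 + alp))
    (hleft : ∀ t ∈ Icc T U, F ((-1 : ℝ) + t * I) ≠ 0) :
    rectIntegral (logDeriv F) (-1) (1 + alp) T U =
      2 * Real.pi * I * ((zeroCount F alp U - zeroCount F alp T : ℝ) : ℂ) := by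
  set S := (hF.finite_nontrivialZeros halp U).toFinset \ (hF.finite_nontrivialZeros halp T).toFinset
  have hline : ∀ {V : ℝ}, V ∈ zeroFreeHeights F (-1) (1 + alp) → ∀ {ρ : ℂ}, F ρ = 0 →
      ρ.re ∈ Icc (-1) (1 + alp) → ρ.im ≠ V := by
    rintro _ hV ρ hρ hre rfl
    exact hV _ hre (by rwa [re_add_im])
  have hside : ∀ {ρ : ℂ}, F ρ = 0 → ρ.im ∈ Icc T U → ρ.re ≠ -1 := fun {ρ} hρ him hre =>
    hleft _ him (by rwa [← hre, re_add_im])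
  have hanalytic : ∀ {ρ : ℂ}, T ≤ ρ.im → AnalyticAt ℂ F ρ := fun him =>
    hF.analyticAt (ne_one_of_im_pos (hT0.trans_le him))
  have hS : ∀ ρ ∈ S, F ρ = 0 ∧ ρ ∈ Ioo (-1) (1 + alp) ×ℂ Ioo T U := fun ρ hρ => by
    simp only [S, Finset.mem_sdiff, Finite.mem_toFinset] at hρ
    obtain ⟨⟨hzero, hre, hre', him, him'⟩, hnot⟩ := hρ
    have hTim : T ≤ ρ.im := not_lt.1 fun h => hnot ⟨hzero, hre, hre', him, h⟩
    exact ⟨hzero, ⟨hre.lt_of_ne' (hside hzero ⟨hTim, him'.le⟩), hre'⟩,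
      hTim.lt_of_ne' (hline hT hzero ⟨hre, hre'.le⟩), him'⟩
  have hzeros : ∀ ρ ∈ Icc (-1) (1 + alp) ×ℂ Icc T U, F ρ = 0 → ρ ∈ S := by
    rintro ρ ⟨⟨hre, hre'⟩, him, him'⟩ hzero
    simp only [S, Finset.mem_sdiff, Finite.mem_toFinset]
    exact ⟨⟨hzero, hre, not_le.1 fun h => hF.ne_zero_of_one_add_le_re halp h hzero,
      hT0.trans_le him, him'.lt_of_ne (hline hU hzero ⟨hre, hre'⟩)⟩, fun h => him.not_gt h.2.2.2.2⟩
  rw [rectIntegral_logDeriv (by linarith) hTU (fun ρ hρ => hanalytic hρ.2.1)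
    (fun ρ hρ => (hS ρ hρ).2) (fun ρ hρ => hF.analyticOrderAt_ne_top halp (ne_one_of_im_pos
      (hT0.trans (hS ρ hρ).2.2.1))) hzeros, hF.zeroCount_sub_zeroCount halp hTU, ofReal_sum]
  refine congrArg _ (Finset.sum_congr rfl fun ρ hρ => ?_)
  rw [zeroOrder, dif_pos (hanalytic (hS ρ hρ).2.2.1.le)]
  rfl

theorem IsLerch.isBigO_two_pi_mul_zeroCount_of_zeroFree {lam alp : ℝ} {F : ℂ → ℂ}
    (hF : IsLerch lam alp F) (hlam0 : 0 < lam) (hlam1 : lam ≤ 1) (halp0 : 0 < alp)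
    (halp1 : alp ≤ 1) :
    (fun T : ℝ => 2 * Real.pi * zeroCount F alp T -
      (T * Real.log T - (1 + Real.log (2 * Real.pi * lam) + Real.log alp) * T))
        =O[atTop ⊓ 𝓟 (zeroFreeHeights F (-1) (1 + alp))] Real.log := by
  have hσ : (-1 : ℝ) ≤ -lam := neg_le_neg hlam1
  obtain ⟨c, hc⟩ := eventually_atTop.1 ((eventually_gt_atTop 0).and
    ((hF.eventually_ne_zero_left hlam0 hlam1 halp0 halp1 hσ).and
      (hF.eventually_isBigO_im_integral_logDeriv_left hlam0 hlam1 halp0 halp1 hσ)))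
  obtain ⟨T₀, hT₀, hfree⟩ := hF.exists_mem_zeroFreeHeights halp0 (-1) (1 + alp)
    (le_max_right c 0) (lt_add_one _)
  have hcT₀ : c ≤ T₀ := (le_max_left c 0).trans hT₀.1.le
  obtain ⟨hT₀pos, -, hleft⟩ := hc T₀ hcT₀
  set l := atTop ⊓ 𝓟 (zeroFreeHeights F (-1) (1 + alp))
  have hone : (1 : ℝ → ℝ) =O[l] Real.log :=
    (Real.isLittleO_const_log_atTop (c := 1)).isBigO.mono inf_le_left
  have hconst := (Real.isLittleO_const_log_atTop (c := 2 * Real.pi * zeroCount F alp T₀ +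
    (∫ x in (-1 : ℝ)..(1 + alp), logDeriv F (x + T₀ * I)).im)).isBigO.mono
      (inf_le_left : l ≤ atTop)
  refine (((hconst.sub (hF.isBigO_im_integral_logDeriv_horizontal halp0 (by linarith))).add
    (((hF.isBigO_im_integral_logDeriv_right halp0 hT₀pos).mono inf_le_left).trans hone)).sub
      ((hleft.mono inf_le_left).trans hone)).congr' ?_ .rfl
  rw [EventuallyEq, eventually_inf_principal]
  filter_upwards [eventually_ge_atTop T₀] with T hT hTfree
  have hrect := congrArg im (hF.rectIntegral_logDeriv_eq_zeroCount halp0 hT₀pos hT hfree hTfree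
    fun t ht => (hc t (hcT₀.trans ht.1)).2.1)
  have hcount : (2 * Real.pi * I * ((zeroCount F alp T - zeroCount F alp T₀ : ℝ) : ℂ)).im =
      2 * Real.pi * (zeroCount F alp T - zeroCount F alp T₀) := by
    simp [-ofReal_sub]
  rw [hcount, rectIntegral, sub_im, add_im, sub_im] at hrect
  linear_combination hrect

end ZeroCount

section Interpolation

open Set Filter Topology Asymptotics

theorem abs_mul_log_sub_mul_sub_le {x y : ℝ} (c : ℝ) (hx : 1 ≤ x) (hxy : x ≤ y)
    (hyx : y ≤ x + 1) :
    |(y * Real.log y - c * y) - (x * Real.log x - c * x)| ≤ Real.log y + (1 + |c|) := by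
  have hx0 : 0 < x := by linarith
  have hlogxy : Real.log x ≤ Real.log y := Real.log_le_log hx0 hxy
  have hlogy : 0 ≤ Real.log y := Real.log_nonneg (hx.trans hxy)
  have hmul : x * (Real.log y - Real.log x) ≤ 1 := by
    rw [← Real.log_div (by linarith) hx0.ne']
    calc x * Real.log (y / x) ≤ x * (y / x - 1) := by
          gcongr
          exact Real.log_le_sub_one_of_pos (div_pos (by linarith) hx0)
      _ = y - x := by field_simp
      _ ≤ 1 := by linarith
  have hsplit : (y * Real.log y - c * y) - (x * Real.log x - c * x) =
      (y - x) * Real.log y + x * (Real.log y - Real.log x) - c * (y - x) := by ring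
  have hdiff : |y - x| ≤ 1 := by
    rw [abs_of_nonneg (by linarith)]
    linarith
  calc _ ≤ |(y - x) * Real.log y| + |x * (Real.log y - Real.log x)| + |c * (y - x)| := by
        rw [hsplit]
        exact (abs_sub _ _).trans (by gcongr; exact abs_add_le _ _)
    _ ≤ 1 * Real.log y + 1 + |c| * 1 := by
        rw [abs_mul, abs_mul c, abs_of_nonneg hlogy,
          abs_of_nonneg (mul_nonneg hx0.le (sub_nonneg.2 hlogxy))]
        gcongr
    _ = Real.log y + (1 + |c|) := by ring

theorem isBigO_log_of_monotone_of_isBigO_log {N : ℝ → ℝ} {s : Set ℝ} {c : ℝ} (hN : Monotone N)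
    (hs : ∀ t, 0 ≤ t → ∃ T ∈ Ioo t (t + 1), T ∈ s)
    (h : (fun T => N T - (T * Real.log T - c * T)) =O[atTop ⊓ 𝓟 s] Real.log) :
    (fun T => N T - (T * Real.log T - c * T)) =O[atTop] Real.log := by
  obtain ⟨C, hC, hbound⟩ := h.exists_nonneg
  rw [isBigOWith_iff, eventually_inf_principal] at hbound
  obtain ⟨T₀, hT₀⟩ := eventually_atTop.1 hbound
  refine .of_bound (2 * (C + 1) + (1 + |c|)) ?_
  filter_upwards [eventually_ge_atTop (max T₀ 3 + 1)] with T hT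
  have hT₀T : T₀ + 1 ≤ T := (add_le_add_left (le_max_left _ _) _).trans hT
  have hT4 : 4 ≤ T := by linarith [le_max_right T₀ 3]
  have hlog : 1 ≤ Real.log T := by
    rw [Real.le_log_iff_exp_le (by linarith)]
    linarith [Real.exp_one_lt_d9]
  have hnear : ∀ U ∈ s, T - 1 < U → U < T + 1 →
      |N U - (U * Real.log U - c * U)| ≤ C * (2 * Real.log T) ∧ Real.log U ≤ 2 * Real.log T :=
    fun U hU hlt hgt => by
      have hlogU : Real.log U ≤ 2 * Real.log T := by
        rw [two_mul, ← Real.log_mul (by linarith) (by linarith)]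
        exact Real.log_le_log (by linarith) (by nlinarith)
      have hb := hT₀ U (by linarith) hU
      rw [Real.norm_eq_abs, Real.norm_of_nonneg (Real.log_nonneg (by linarith))] at hb
      exact ⟨hb.trans (by gcongr), hlogU⟩
  obtain ⟨a, ha, has⟩ := hs (T - 1) (by linarith)
  obtain ⟨b, hb, hbs⟩ := hs T (by linarith)
  rw [sub_add_cancel] at ha
  have hNa := abs_le.1 (hnear a has ha.1 (by linarith [ha.2])).1
  obtain ⟨hNb, hlogb⟩ := hnear b hbs (by linarith [hb.1]) hb.2
  have hga := abs_le.1
    (abs_mul_log_sub_mul_sub_le c (by linarith [ha.1]) ha.2.le (by linarith [ha.1]))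
  have hgb := abs_le.1 (abs_mul_log_sub_mul_sub_le c (by linarith) hb.1.le hb.2.le)
  have hc : 1 + |c| ≤ (1 + |c|) * Real.log T := le_mul_of_one_le_right (by positivity) hlog
  rw [Real.norm_eq_abs, Real.norm_of_nonneg (by linarith), abs_le]
  constructor <;>
    linarith [hN ha.2.le, hN hb.1.le, hNa.1, (abs_le.1 hNb).2, hga.1, hga.2, hgb.1, hgb.2]

end Interpolation

/-- the Riemann–von Mangoldt type formula for the number of nontrivial
zeros of the Lerch zeta-function. -/
theorem lerch_zero_counting (lam alp : ℝ) (hlam0 : 0 < lam) (hlam1 : lam ≤ 1)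
    (halp0 : 0 < alp) (halp1 : alp ≤ 1) (F : ℂ → ℂ) (hF : IsLerch lam alp F) :
    (fun T : ℝ =>
        (∑ᶠ ρ ∈ {ρ : ℂ | F ρ = 0 ∧ -1 ≤ ρ.re ∧ ρ.re < 1 + alp ∧ 0 < ρ.im ∧ ρ.im < T},
          (zeroOrder F ρ : ℝ))
        - T / (2 * Real.pi) * Real.log (T / (2 * Real.pi * Real.exp 1 * alp * lam)))
      =O[Filter.atTop] Real.log := by
  have hmono : Monotone fun T => 2 * Real.pi * zeroCount F alp T :=
    (hF.monotone_zeroCount halp0).const_mul Real.two_pi_pos.le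
  have hcount := isBigO_log_of_monotone_of_isBigO_log hmono
    (fun t ht => hF.exists_mem_zeroFreeHeights halp0 (-1) (1 + alp) ht (lt_add_one t))
    (hF.isBigO_two_pi_mul_zeroCount_of_zeroFree hlam0 hlam1 halp0 halp1)
  refine (hcount.const_mul_left (2 * Real.pi)⁻¹).congr' ?_ .rfl
  filter_upwards [Filter.eventually_gt_atTop 0] with T hT
  have hlog : Real.log (T / (2 * Real.pi * Real.exp 1 * alp * lam)) =
      Real.log T - (1 + Real.log (2 * Real.pi * lam) + Real.log alp) := by
    rw [show 2 * Real.pi * Real.exp 1 * alp * lam = Real.exp 1 * (2 * Real.pi * lam) * alp by ring,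
      Real.log_div hT.ne' (by positivity), Real.log_mul (by positivity) halp0.ne',
      Real.log_mul (by positivity) (by positivity), Real.log_exp]
  rw [hlog]
  change _ = zeroCount F alp T - _
  field_simp
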